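/- (Theorem 1: local Hölder stability for the inverse drift problem.) Fix a bounded continuous function p : closure(Ω) → ℝ and functions a₁, …, a_n ∈ C¹(closure(Ω)) such that the n×n matrix with columns ∇a₁(x), …, ∇a_n(x) is invertible for every x ∈ closure(Ω). Then there exists a graph-type subdomain D with D ⊂ Ω and 0 ∈ ∂D ∩ ∂Ω (independent of M₀, H₁, H₂ below), and for every M₀ > 0 there exist constants C > 0 and θ ∈ (0,1), such that the following holds: whenever H₁, H₂ ∈ 𝓗 and, for j = 1,2 and k = 1,…,n, u_{j,k} : closure(Ω) × [0,T] → ℝ are functions such that u_{j,k} and ∂_t u_{j,k} are C¹ on closure(Ω) × [0,T], u_{j,k} satisfies ∂_t u_{j,k} + ⟨H_j(x), ∇_x u_{j,k}⟩ + p(x) u_{j,k} = 0 on Ω × (0,T) and u_{j,k}(x,0) = a_k(x) on Ω, and ∫₀^T (sup_{x∈Ω} |∇_x ∂_t u_{j,k}(x,t)|)² dt ≤ M₀², one has (∫_D |H₁(x) − H₂(x)|² dx)^{1/2} ≤ C ( Σ_{k=1}^n ‖∂_t u_{1,k} − ∂_t u_{2,k}‖_{L²(Γ×(0,T))}^θ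 + Σ_{k=1}^n ‖∂_t u_{1,k} − ∂_t u_{2,k}‖_{L²(Γ×(0,T))} ). -/

import Mathlib

noncomputable section

open MeasureTheory Metric Set
open scoped RealInnerProductSpace

abbrev Esp (n : ℕ) : Type := EuclideanSpace ℝ (Fin n)

/-- The point `(x', xₙ) ∈ ℝ^{d+1} = ℝ^d × ℝ`. -/
noncomputable def graphMk (d : ℕ) (x' : Esp d) (xn : ℝ) : Esp (d+1) :=
  (EuclideanSpace.equiv (Fin (d+1)) ℝ).symm
    (Fin.snoc (⇑(EuclideanSpace.equiv (Fin d) ℝ) x') xn)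

/-- `H` is `(M, δ₀)`-admissible on the compact set `K`. -/
def IsAdmissible {n : ℕ} (M δ₀ : ℝ) (K : Set (Esp n)) (H : Esp n → Esp n) : Prop :=
  ∃ U : Set (Esp n), IsOpen U ∧ Convex ℝ U ∧ K ⊆ U ∧ ContDiffOn ℝ 1 H U ∧
    (∀ x ∈ U, ‖H x‖ ≤ M) ∧ (∀ x ∈ U, ‖fderiv ℝ H x‖ ≤ M) ∧ (∀ x ∈ K, δ₀ < ‖H x‖)

/-- `ψ_H(x) = ⟨x, H(x)⟩`. -/
noncomputable def psiW {n : ℕ} (H : Esp n → Esp n) (x : Esp n) : ℝ := ⟪x, H x⟫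

/-- The Carleman weight `φ_H(x,t) = -βt + ψ_H(x)`. -/
noncomputable def phiW {n : ℕ} (β : ℝ) (H : Esp n → Esp n) (x : Esp n) (t : ℝ) : ℝ :=
  -(β * t) + psiW H x

/-- Outward unit normal `ν₁` of the upper graph `xₙ = ℓ(x')`. -/
noncomputable def nuUp (d : ℕ) (ℓ : Esp d → ℝ) (x' : Esp d) : Esp (d+1) :=
  (Real.sqrt (1 + ‖gradient ℓ x'‖ ^ 2))⁻¹ • graphMk d (-(gradient ℓ x')) 1

/-- Outward unit normal `ν₂` of the lower graph `xₙ = m(x')`. -/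
noncomputable def nuDown (d : ℕ) (m : Esp d → ℝ) (x' : Esp d) : Esp (d+1) :=
  (Real.sqrt (1 + ‖gradient m x'‖ ^ 2))⁻¹ • graphMk d (gradient m x') (-1)

/-- Area element `ω(x') = √(1 + |∇m(x')|²)` of the graph of `m`. -/
noncomputable def omegaW (d : ℕ) (m : Esp d → ℝ) (x' : Esp d) : ℝ :=
  Real.sqrt (1 + ‖gradient m x'‖ ^ 2)

/-- The graph domain `D = {(x', xₙ) : |x'| < ρ₁, ℓ(x') − ℓ̃(x') < xₙ < ℓ(x')}`. -/
def graphDomain (d : ℕ) (ρ₁ : ℝ) (ℓ ℓt : Esp d → ℝ) : Set (Esp (d+1)) :=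
  {x | ∃ x' : Esp d, ∃ xn : ℝ, ‖x'‖ < ρ₁ ∧ ℓ x' - ℓt x' < xn ∧ xn < ℓ x' ∧
    x = graphMk d x' xn}

open scoped Topology

/-! Let `y = ∂ₜ(u₁ - u₂)`. It solves `∂ₜy + ⟨H₁, ∇y⟩ + p y = ⟨H₂ - H₁, ∇∂ₜu₂⟩`, and at time `0` it
equals `-⟨∇a, H₁ - H₂⟩`, so that what is sought is a bound for `y(·, 0)`.

Flatten `Γ` by `(x, s) ↦ (x, ℓ(x) + s)` and multiply the equation for `y²` by the power `k + 2` of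
the truncated phase `φ = (η (1 - t / T) + s - |x|²)₊`. The phase vanishes for `t = T`, for `s = -η`
and for `|x|² ≥ η`, so the only boundary terms are at `t = 0` and on `Γ`. Since `H₁` is transversal
to `Γ` at the origin, `φ` increases along the flow of `H₁` at speed at least `δ / 4` near the
origin, and for large `k` this absorbs the zeroth-order and divergence terms. The right-hand side
contributes a small multiple of the weighted energy of `H₁ - H₂`, which by the independence of the
gradients `∇aⱼ` is controlled by the sum over `j` of the energies of the `yⱼ(·, 0)` and is absorbed
as well. This gives even a Lipschitz estimate, on any set where `φ(·, 0)` is bounded below. -/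

section OneSidedDerivatives

variable {E F : Type*} [NormedAddCommGroup E] [NormedSpace ℝ E]
  [NormedAddCommGroup F] [NormedSpace ℝ F] {f : E → F} {K : Set E}

theorem exists_continuousOn_hasFDerivWithinAt_of_contDiffOn_one (hf : ContDiffOn ℝ 1 f K)
    {x : E} (hx : x ∈ K) :
    ∃ V : Set E, IsOpen V ∧ x ∈ V ∧ ∃ f' : E → E →L[ℝ] F,
      (∀ y ∈ V ∩ K, HasFDerivWithinAt f (f' y) K y) ∧ ContinuousOn f' (V ∩ K) := by
  obtain ⟨u, hu, -, f', hf', hf'_cont⟩ := (contDiffOn_succ_iff_hasFDerivWithinAt (by simp)).1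
    (show ContDiffOn ℝ (0 + 1) f K by simpa using hf) x hx
  rw [insert_eq_of_mem hx] at hu
  obtain ⟨V, hVo, hxV, hVu⟩ := mem_nhdsWithin.1 hu
  refine ⟨V, hVo, hxV, f', fun y hy => ?_, hf'_cont.continuousOn.mono hVu⟩
  have hy' := (hf' y (hVu hy)).mono hVu
  rwa [inter_comm, hasFDerivWithinAt_inter (hVo.mem_nhds hy.1)] at hy'

theorem exists_norm_fderiv_interior_le_of_contDiffOn_one (hK : IsCompact K)
    (hf : ContDiffOn ℝ 1 f K) : ∃ C : ℝ, ∀ y ∈ interior K, ‖fderiv ℝ f y‖ ≤ C := by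
  have hlocal : ∀ x ∈ K, ∃ s ∈ 𝓝[K] x, ∃ C : ℝ, ∀ y ∈ s ∩ interior K, ‖fderiv ℝ f y‖ ≤ C := by
    intro x hx
    obtain ⟨V, hVo, hxV, f', hf', hf'_cont⟩ :=
      exists_continuousOn_hasFDerivWithinAt_of_contDiffOn_one hf hx
    have hV : V ∈ 𝓝[K] x := mem_nhdsWithin_of_mem_nhds (hVo.mem_nhds hxV)
    have hbound : ∀ᶠ y in 𝓝[V ∩ K] x, ‖f' y‖ < ‖f' x‖ + 1 :=
      (hf'_cont x ⟨hxV, hx⟩).norm.eventually (gt_mem_nhds (lt_add_one _))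
    rw [nhdsWithin_inter_of_mem hV] at hbound
    refine ⟨_, Filter.inter_mem hbound (Filter.inter_mem hV self_mem_nhdsWithin), ‖f' x‖ + 1, ?_⟩
    rintro y ⟨⟨hy, hyV⟩, hyK⟩
    rw [((hf' y hyV).hasFDerivAt (mem_interior_iff_mem_nhds.1 hyK)).fderiv]
    exact le_of_lt hy
  have hglobal : ∃ C : ℝ, ∀ y ∈ K ∩ interior K, ‖fderiv ℝ f y‖ ≤ C := by
    refine hK.induction_on (p := fun s => ∃ C : ℝ, ∀ y ∈ s ∩ interior K, ‖fderiv ℝ f y‖ ≤ C)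
      ⟨0, by simp⟩ (fun s t hst ⟨C, hC⟩ => ⟨C, fun y hy => hC y ⟨hst hy.1, hy.2⟩⟩) ?_ hlocal
    rintro s t ⟨C, hC⟩ ⟨D, hD⟩
    refine ⟨max C D, ?_⟩
    rintro y ⟨hy | hy, hyK⟩
    · exact (hC y ⟨hy, hyK⟩).trans (le_max_left _ _)
    · exact (hD y ⟨hy, hyK⟩).trans (le_max_right _ _)
  obtain ⟨C, hC⟩ := hglobal
  exact ⟨C, fun y hy => hC y ⟨interior_subset hy, hy⟩⟩

end OneSidedDerivatives

section Slab

/-- The closed slab `E × [-η, 0] × [0, T]` of points `((x, s), t)`: `x` runs through the horizontal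
directions, `s` is the vertical coordinate and `t` the time. -/
def slab (E : Type*) (η T : ℝ) : Set ((E × ℝ) × ℝ) :=
  (univ ×ˢ Icc (-η) 0) ×ˢ Icc 0 T

/-- A function on the slab that is `C¹` up to the boundary and vanishes for `‖x‖ ≥ r`. These are
the functions to which the divergence theorem is applied. -/
structure IsSlabTestFunction {E : Type*} [NormedAddCommGroup E] [NormedSpace ℝ E]
    (η T r : ℝ) (f : (E × ℝ) × ℝ → ℝ) : Prop where
  contDiffOn : ContDiffOn ℝ 1 f (slab E η T)
  eq_zero : ∀ z ∈ slab E η T, r ≤ ‖z.1.1‖ → f z = 0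

theorem mem_interior_slab {E : Type*} [TopologicalSpace E] {η T : ℝ} {z : (E × ℝ) × ℝ} :
    z ∈ interior (slab E η T) ↔ z.1.2 ∈ Ioo (-η) 0 ∧ z.2 ∈ Ioo 0 T := by
  simp [slab, interior_prod_eq]

namespace IsSlabTestFunction

variable {E : Type*} [NormedAddCommGroup E] [NormedSpace ℝ E] {η T r : ℝ}
  {f : (E × ℝ) × ℝ → ℝ}

theorem of_contDiffOn_cylinder {ρ : ℝ} (hr : r < ρ)
    (hf : ContDiffOn ℝ 1 f ((closedBall 0 ρ ×ˢ Icc (-η) 0) ×ˢ Icc 0 T))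
    (h0 : ∀ z ∈ slab E η T, r ≤ ‖z.1.1‖ → f z = 0) : IsSlabTestFunction η T r f := by
  refine ⟨contDiffOn_of_locally_contDiffOn fun z _ => ?_, h0⟩
  rcases lt_or_ge ‖z.1.1‖ ρ with hzρ | hzρ
  · refine ⟨{w | ‖w.1.1‖ < ρ}, isOpen_lt (by fun_prop) (by fun_prop), hzρ, hf.mono ?_⟩
    rintro w ⟨hw, hwρ⟩
    exact ⟨⟨mem_closedBall_zero_iff.2 (le_of_lt hwρ), hw.1.2⟩, hw.2⟩
  · refine ⟨{w | r < ‖w.1.1‖}, isOpen_lt (by fun_prop) (by fun_prop), hr.trans_le hzρ, ?_⟩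
    exact (contDiffOn_const (c := (0 : ℝ))).congr fun w hw => h0 w hw.1 (le_of_lt hw.2)

theorem eventuallyEq_zero (hf : IsSlabTestFunction η T r f) {z : (E × ℝ) × ℝ}
    (hz : z ∈ interior (slab E η T)) (hr : r < ‖z.1.1‖) : f =ᶠ[𝓝 z] fun _ => 0 := by
  filter_upwards [mem_interior_iff_mem_nhds.1 hz,
    (isOpen_lt (by fun_prop) (by fun_prop) : IsOpen {w : (E × ℝ) × ℝ | r < ‖w.1.1‖}).mem_nhds hr]
    with w hw hwr using hf.eq_zero w hw (le_of_lt hwr)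

theorem fderiv_eq_zero (hf : IsSlabTestFunction η T r f) {z : (E × ℝ) × ℝ}
    (hz : z ∈ interior (slab E η T)) (hr : r < ‖z.1.1‖) : fderiv ℝ f z = 0 := by
  rw [(hf.eventuallyEq_zero hz hr).fderiv_eq, fderiv_fun_const, Pi.zero_apply]

theorem differentiableAt (hf : IsSlabTestFunction η T r f) {z : (E × ℝ) × ℝ}
    (hz : z ∈ interior (slab E η T)) : DifferentiableAt ℝ f z :=
  (hf.contDiffOn.contDiffAt (mem_interior_iff_mem_nhds.1 hz)).differentiableAt one_ne_zero

theorem exists_norm_fderiv_le [ProperSpace E] (hf : IsSlabTestFunction η T r f) :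
    ∃ C : ℝ, ∀ z ∈ interior (slab E η T), ‖fderiv ℝ f z‖ ≤ C := by
  obtain ⟨C, hC⟩ := exists_norm_fderiv_interior_le_of_contDiffOn_one
    (((isCompact_closedBall (0 : E) (r + 1)).prod isCompact_Icc).prod isCompact_Icc)
    (hf.contDiffOn.mono (prod_mono (prod_mono (subset_univ _) subset_rfl) subset_rfl))
  refine ⟨max C 0, fun z hz => ?_⟩
  rcases lt_or_ge r ‖z.1.1‖ with hzr | hzr
  · simp [hf.fderiv_eq_zero hz hzr]
  · refine (hC z ?_).trans (le_max_left _ _)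
    rw [mem_interior_slab] at hz
    simp only [interior_prod_eq, interior_Icc]
    exact ⟨⟨ball_subset_interior_closedBall (mem_ball_zero_iff.2 (by linarith)), hz.1⟩, hz.2⟩

end IsSlabTestFunction

end Slab

section SlabIntegrals

variable (E : Type*) [NormedAddCommGroup E] [InnerProductSpace ℝ E] [FiniteDimensional ℝ E]
  [MeasurableSpace E] [BorelSpace E]

/-- Lebesgue measure on the layer `E × (-η, 0)`, the spatial part of the slab. -/
def layerMeasure (η : ℝ) : Measure (E × ℝ) :=
  (volume : Measure E).prod (volume.restrict (Ioo (-η) 0))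

/-- Lebesgue measure on the open slab `E × (-η, 0) × (0, T)`. -/
def slabMeasure (η T : ℝ) : Measure ((E × ℝ) × ℝ) :=
  (layerMeasure E η).prod (volume.restrict (Ioo 0 T))

instance (η : ℝ) : SFinite (layerMeasure E η) := by
  unfold layerMeasure; infer_instance

theorem layerMeasure_eq_restrict (η : ℝ) :
    layerMeasure E η = volume.restrict (univ ×ˢ Ioo (-η) 0) := by
  rw [layerMeasure, Measure.volume_eq_prod, ← Measure.prod_restrict, Measure.restrict_univ]

theorem slabMeasure_eq_restrict (η T : ℝ) :
    slabMeasure E η T = volume.restrict (interior (slab E η T)) := by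
  rw [slabMeasure, layerMeasure_eq_restrict, Measure.prod_restrict]
  simp [slab, interior_prod_eq, Measure.volume_eq_prod]

theorem ae_layerMeasure_snd_mem (η : ℝ) : ∀ᵐ y ∂layerMeasure E η, y.2 ∈ Ioo (-η) 0 := by
  rw [layerMeasure_eq_restrict]
  filter_upwards [ae_restrict_mem (MeasurableSet.univ.prod measurableSet_Ioo)] with y hy
    using hy.2

theorem ae_slabMeasure_mem_interior (η T : ℝ) :
    ∀ᵐ z ∂slabMeasure E η T, z ∈ interior (slab E η T) := by
  rw [slabMeasure_eq_restrict]
  exact ae_restrict_mem isOpen_interior.measurableSet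

variable {E}

theorem setIntegral_Ioo_fderiv_comp {F : Type*} [NormedAddCommGroup F] [NormedSpace ℝ F]
    {f : F → ℝ} {γ : ℝ → F} {w : F} {a b : ℝ} (hab : a ≤ b) (hγ : ∀ s, HasDerivAt γ w s)
    (hc : ContinuousOn (fun s => f (γ s)) (Icc a b))
    (hd : ∀ s ∈ Ioo a b, DifferentiableAt ℝ f (γ s))
    (hi : IntegrableOn (fun s => fderiv ℝ f (γ s) w) (Ioo a b)) :
    ∫ s in Ioo a b, fderiv ℝ f (γ s) w = f (γ b) - f (γ a) := by
  rw [← integral_Ioc_eq_integral_Ioo, ← intervalIntegral.integral_of_le hab]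
  exact intervalIntegral.integral_eq_sub_of_hasDerivAt_of_le hab hc
    (fun s hs => (hd s hs).hasFDerivAt.comp_hasDerivAt s (hγ s))
    ((intervalIntegrable_iff_integrableOn_Ioo_of_le hab).2 hi)

theorem integral_fderiv_apply_eq_zero_of_hasCompactSupport {g : E → ℝ} (hg : Differentiable ℝ g)
    (hsupp : HasCompactSupport g) {e : E} (hi : Integrable fun x => fderiv ℝ g x e) :
    ∫ x, fderiv ℝ g x e = 0 := by
  have hparts := integral_mul_fderiv_eq_neg_fderiv_mul_of_integrable
    (μ := (volume : Measure E)) (f := fun _ : E => (1 : ℝ)) (g := g) (v := e)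
    (by simp) (by simpa only [one_mul] using hi)
    (by simpa only [one_mul] using hg.continuous.integrable_of_hasCompactSupport hsupp)
    (fun x _ => differentiableAt_const _) (fun x _ => hg x)
  simpa only [one_mul, fderiv_fun_const, Pi.zero_apply, zero_apply, zero_mul,
    integral_zero, neg_zero] using hparts

namespace IsSlabTestFunction

variable {η T r : ℝ} {f : (E × ℝ) × ℝ → ℝ}

theorem integrable_fderiv_apply (hf : IsSlabTestFunction η T r f) (w : (E × ℝ) × ℝ) :
    Integrable (fun z => fderiv ℝ f z w) (slabMeasure E η T) := by
  obtain ⟨C, hC⟩ := hf.exists_norm_fderiv_le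
  rw [slabMeasure_eq_restrict]
  have hcore : IntegrableOn (fun z => fderiv ℝ f z w)
      (interior (slab E η T) ∩ {z | ‖z.1.1‖ ≤ r}) := by
    refine Measure.integrableOn_of_bounded (M := C * ‖w‖) (ne_of_lt ?_)
      (measurable_fderiv_apply_const ℝ f w).aestronglyMeasurable ?_
    · refine (measure_mono fun z hz => ?_).trans_lt
        (((isCompact_closedBall (0 : E) r).prod (isCompact_Icc (a := -η) (b := 0))).prod
          (isCompact_Icc (a := 0) (b := T))).measure_lt_top
      have hz' := interior_subset hz.1
      exact ⟨⟨mem_closedBall_zero_iff.2 hz.2, hz'.1.2⟩, hz'.2⟩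
    · refine (ae_restrict_iff' (isOpen_interior.measurableSet.inter
        (isClosed_le (by fun_prop) (by fun_prop)).measurableSet)).2 (.of_forall fun z hz => ?_)
      exact (ContinuousLinearMap.le_opNorm _ _).trans
        (mul_le_mul_of_nonneg_right (hC z hz.1) (norm_nonneg _))
  refine hcore.of_forall_sdiff_eq_zero isOpen_interior.measurableSet fun z hz => ?_
  rw [hf.fderiv_eq_zero hz.1 (not_le.1 fun hzr => hz.2 ⟨hz.1, hzr⟩)]
  rfl

theorem integral_fderiv_time (hf : IsSlabTestFunction η T r f) (hT : 0 ≤ T)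
    (hfT : ∀ y : E × ℝ, y.2 ∈ Ioo (-η) 0 → f (y, T) = 0) :
    ∫ z, fderiv ℝ f z ((0, 0), 1) ∂slabMeasure E η T = - ∫ y, f (y, 0) ∂layerMeasure E η := by
  have hi := hf.integrable_fderiv_apply ((0, 0), 1)
  rw [slabMeasure] at hi ⊢
  rw [integral_prod _ hi, ← integral_neg]
  refine integral_congr_ae ?_
  filter_upwards [hi.prod_right_ae, ae_layerMeasure_snd_mem E η] with y hyi hy
  have hγ (t : ℝ) : HasDerivAt (fun t => (y, t)) (((0 : E), (0 : ℝ)), (1 : ℝ)) t :=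
    (hasDerivAt_const t y).prodMk (hasDerivAt_id t)
  rw [setIntegral_Ioo_fderiv_comp (γ := fun t => (y, t)) hT hγ ?_ ?_ hyi, hfT y hy, zero_sub]
  · exact hf.contDiffOn.continuousOn.comp (by fun_prop)
      fun t ht => ⟨⟨mem_univ _, Ioo_subset_Icc_self hy⟩, ht⟩
  · exact fun t ht => hf.differentiableAt (mem_interior_slab.2 ⟨hy, ht⟩)

theorem integral_fderiv_vertical (hf : IsSlabTestFunction η T r f) (hη : 0 ≤ η)
    (hfη : ∀ (x : E), ∀ t ∈ Ioo 0 T, f ((x, -η), t) = 0) :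
    ∫ z, fderiv ℝ f z ((0, 1), 0) ∂slabMeasure E η T = ∫ t in Ioo 0 T, ∫ x, f ((x, 0), t) := by
  have hi := hf.integrable_fderiv_apply ((0, 1), 0)
  rw [slabMeasure] at hi ⊢
  rw [integral_prod_symm _ hi]
  refine integral_congr_ae ?_
  filter_upwards [hi.prod_left_ae, ae_restrict_mem measurableSet_Ioo] with t hti ht
  rw [layerMeasure] at hti ⊢
  rw [integral_prod _ hti]
  refine integral_congr_ae ?_
  filter_upwards [hti.prod_right_ae] with x hxi
  have hγ (s : ℝ) : HasDerivAt (fun s => ((x, s), t)) (((0 : E), (1 : ℝ)), (0 : ℝ)) s :=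
    ((hasDerivAt_const s x).prodMk (hasDerivAt_id s)).prodMk (hasDerivAt_const s t)
  rw [setIntegral_Ioo_fderiv_comp (γ := fun s => ((x, s), t)) (neg_nonpos.2 hη) hγ ?_ ?_ hxi,
    hfη x t ht, sub_zero]
  · exact hf.contDiffOn.continuousOn.comp (by fun_prop)
      fun s hs => ⟨⟨mem_univ _, hs⟩, Ioo_subset_Icc_self ht⟩
  · exact fun s hs => hf.differentiableAt (mem_interior_slab.2 ⟨hs, ht⟩)

theorem integral_fderiv_horizontal (hf : IsSlabTestFunction η T r f) (e : E) :
    ∫ z, fderiv ℝ f z ((e, 0), 0) ∂slabMeasure E η T = 0 := by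
  have hi := hf.integrable_fderiv_apply ((e, 0), 0)
  rw [slabMeasure] at hi ⊢
  rw [integral_prod_symm _ hi]
  refine integral_eq_zero_of_ae ?_
  filter_upwards [hi.prod_left_ae, ae_restrict_mem measurableSet_Ioo] with t hti ht
  rw [layerMeasure] at hti ⊢
  rw [integral_prod_symm _ hti]
  refine integral_eq_zero_of_ae ?_
  filter_upwards [hti.prod_left_ae, ae_restrict_mem measurableSet_Ioo] with s hsi hs
  have hslice (x : E) : HasFDerivAt (fun x => f ((x, s), t))
      ((fderiv ℝ f ((x, s), t)).comp
        (((ContinuousLinearMap.id ℝ E).prod (0 : E →L[ℝ] ℝ)).prod (0 : E →L[ℝ] ℝ))) x :=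
    (hf.differentiableAt (mem_interior_slab.2 ⟨hs, ht⟩)).hasFDerivAt.comp x
      (((hasFDerivAt_id x).prodMk (hasFDerivAt_const s x)).prodMk (hasFDerivAt_const t x))
  have hslice_apply (x : E) : fderiv ℝ (fun x => f ((x, s), t)) x e =
      fderiv ℝ f ((x, s), t) ((e, 0), 0) := by
    rw [(hslice x).fderiv]
    rfl
  have hsupp : HasCompactSupport fun x => f ((x, s), t) :=
    HasCompactSupport.intro (isCompact_closedBall (0 : E) r) fun x hx =>
      hf.eq_zero _ ⟨⟨mem_univ _, Ioo_subset_Icc_self hs⟩, Ioo_subset_Icc_self ht⟩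
        (not_le.1 fun h => hx (mem_closedBall_zero_iff.2 h)).le
  have hzero : ∫ x, fderiv ℝ (fun x => f ((x, s), t)) x e = 0 :=
    integral_fderiv_apply_eq_zero_of_hasCompactSupport
      (fun x => (hslice x).differentiableAt) hsupp (by simpa only [hslice_apply] using hsi)
  simp only [hslice_apply] at hzero
  exact hzero

end IsSlabTestFunction

end SlabIntegrals

section Weight

theorem hasDerivAt_max_zero_pow (k : ℕ) (r : ℝ) :
    HasDerivAt (fun r : ℝ => max r 0 ^ (k + 2)) ((k + 2) * max r 0 ^ (k + 1)) r := by
  rcases lt_trichotomy r 0 with hr | rfl | hr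
  · have hzero : (fun r : ℝ => max r 0 ^ (k + 2)) =ᶠ[𝓝 r] fun _ => 0 := by
      filter_upwards [gt_mem_nhds hr] with y hy
      simp [max_eq_right hy.le]
    simpa [max_eq_right hr.le] using (hasDerivAt_const r (0 : ℝ)).congr_of_eventuallyEq hzero
  · have hbig : (fun r : ℝ => max r 0 ^ (k + 2)) =O[𝓝 0] fun r : ℝ => r ^ (k + 2) := by
      refine Asymptotics.IsBigO.of_bound 1 (.of_forall fun r => ?_)
      rw [one_mul, norm_pow, norm_pow, Real.norm_eq_abs, Real.norm_eq_abs,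
        abs_of_nonneg (le_max_right r 0)]
      exact pow_le_pow_left₀ (le_max_right r 0) (max_le (le_abs_self r) (abs_nonneg r)) _
    have hlittle : (fun r : ℝ => r ^ (k + 2)) =o[𝓝 0] fun r : ℝ => r := by
      simpa using Asymptotics.isLittleO_pow_id (𝕜 := ℝ) (n := k + 2) (by omega)
    simpa [hasDerivAt_iff_isLittleO] using hbig.trans_isLittleO hlittle
  · have hpow : (fun r : ℝ => max r 0 ^ (k + 2)) =ᶠ[𝓝 r] fun r => r ^ (k + 2) := by
      filter_upwards [lt_mem_nhds hr] with y hy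
      simp [max_eq_left hy.le]
    simpa [max_eq_left hr.le] using (hasDerivAt_pow (k + 2) r).congr_of_eventuallyEq hpow

theorem contDiff_max_zero_pow (k : ℕ) : ContDiff ℝ 1 (fun r : ℝ => max r 0 ^ (k + 2)) := by
  refine contDiff_one_iff_deriv.2
    ⟨fun r => (hasDerivAt_max_zero_pow k r).differentiableAt, ?_⟩
  rw [funext fun r => (hasDerivAt_max_zero_pow k r).deriv]
  fun_prop

variable {E : Type*} [NormedAddCommGroup E]

/-- The phase of the Carleman weight. Inside the slab its positivity set stays away from
`t = T`, `s = -η` and `‖x‖² ≥ η`. -/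
def slabPhase (η T : ℝ) (z : (E × ℝ) × ℝ) : ℝ :=
  η * (1 - z.2 / T) + z.1.2 - ‖z.1.1‖ ^ 2

/-- The Carleman weight: a large power of the positive part of the phase, which is `C¹` and
supported where the phase is nonnegative. -/
def slabWeight (η T : ℝ) (k : ℕ) (z : (E × ℝ) × ℝ) : ℝ :=
  max (slabPhase η T z) 0 ^ (k + 2)

variable {η T : ℝ} {k : ℕ} {z : (E × ℝ) × ℝ}

theorem slabWeight_nonneg (η T : ℝ) (k : ℕ) (z : (E × ℝ) × ℝ) : 0 ≤ slabWeight η T k z :=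
  pow_nonneg (le_max_right _ _) _

theorem slabWeight_eq_zero (hz : slabPhase η T z ≤ 0) : slabWeight η T k z = 0 := by
  simp [slabWeight, max_eq_right hz]

theorem slabPhase_le_initial (hη : 0 ≤ η) (hz : z ∈ slab E η T) :
    slabPhase η T z ≤ slabPhase η T (z.1, 0) := by
  have hdecay : 0 ≤ η * (z.2 / T) :=
    mul_nonneg hη (div_nonneg hz.2.1 (hz.2.1.trans hz.2.2))
  simp only [slabPhase, zero_div, sub_zero, mul_one]
  linarith

theorem slabWeight_le_initial (hη : 0 ≤ η) (hz : z ∈ slab E η T) :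
    slabWeight η T k z ≤ slabWeight η T k (z.1, 0) :=
  pow_le_pow_left₀ (le_max_right _ _) (max_le_max_right 0 (slabPhase_le_initial hη hz)) _

theorem slabPhase_le (hη : 0 ≤ η) (hz : z ∈ slab E η T) :
    slabPhase η T z ≤ η - ‖z.1.1‖ ^ 2 := by
  have hinitial := slabPhase_le_initial hη hz
  have hvert := hz.1.2.2
  simp only [slabPhase, zero_div, sub_zero, mul_one] at hinitial ⊢
  linarith

theorem slabPhase_terminal_nonpos (hT : T ≠ 0) {y : E × ℝ} (hy : y.2 ≤ 0) :
    slabPhase η T (y, T) ≤ 0 := by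
  simp only [slabPhase, div_self hT]
  nlinarith [sq_nonneg ‖y.1‖]

theorem slabPhase_bottom_nonpos (hη : 0 ≤ η) {x : E} {t : ℝ} (ht : t ∈ Icc 0 T) :
    slabPhase η T ((x, -η), t) ≤ 0 := by
  have hdecay : 0 ≤ η * (t / T) := mul_nonneg hη (div_nonneg ht.1 (ht.1.trans ht.2))
  simp only [slabPhase]
  nlinarith [sq_nonneg ‖x‖]

theorem div_mul_slabWeight_le (hη : 0 < η) (hz : z ∈ slab E η T) :
    (k + 2) / η * slabWeight η T k z ≤ (k + 2) * max (slabPhase η T z) 0 ^ (k + 1) := by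
  have hmax : max (slabPhase η T z) 0 ≤ η :=
    max_le ((slabPhase_le hη.le hz).trans (sub_le_self _ (sq_nonneg _))) hη.le
  rw [slabWeight, div_mul_eq_mul_div, div_le_iff₀ hη, pow_succ _ (k + 1), ← mul_assoc]
  gcongr

theorem slabWeight_eq_zero_of_sqrt_le_norm (hη : 0 ≤ η) (hz : z ∈ slab E η T)
    (hnorm : √η ≤ ‖z.1.1‖) : slabWeight η T k z = 0 := by
  have hsq : η ≤ ‖z.1.1‖ ^ 2 := (Real.sqrt_le_left (norm_nonneg _)).1 hnorm
  exact slabWeight_eq_zero ((slabPhase_le hη hz).trans (sub_nonpos.2 hsq))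

variable [InnerProductSpace ℝ E]

theorem contDiff_slabPhase (η T : ℝ) : ContDiff ℝ 1 (slabPhase (E := E) η T) := by
  have hnorm : ContDiff ℝ 1 fun z : (E × ℝ) × ℝ => ‖z.1.1‖ ^ 2 :=
    (contDiff_fst.comp contDiff_fst).norm_sq ℝ
  unfold slabPhase
  fun_prop

theorem contDiff_slabWeight (η T : ℝ) (k : ℕ) : ContDiff ℝ 1 (slabWeight (E := E) η T k) :=
  (contDiff_max_zero_pow k).comp (contDiff_slabPhase η T)

theorem fderiv_slabPhase (η T : ℝ) (z w : (E × ℝ) × ℝ) :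
    fderiv ℝ (slabPhase η T) z w = w.1.2 - 2 * ⟪z.1.1, w.1.1⟫ - η / T * w.2 := by
  have htime : HasFDerivAt (fun z : (E × ℝ) × ℝ => η * (1 - z.2 / T)) _ z :=
    (((hasFDerivAt_snd (𝕜 := ℝ)).mul_const T⁻¹).const_sub 1).const_mul η
  have hvert : HasFDerivAt (fun z : (E × ℝ) × ℝ => z.1.2) _ z :=
    (hasFDerivAt_snd (𝕜 := ℝ)).comp z hasFDerivAt_fst
  have hhor : HasFDerivAt (fun z : (E × ℝ) × ℝ => ‖z.1.1‖ ^ 2) _ z :=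
    ((ContinuousLinearMap.fst ℝ E ℝ).comp (ContinuousLinearMap.fst ℝ (E × ℝ) ℝ)).hasFDerivAt.norm_sq
  have hphase : HasFDerivAt (slabPhase η T) _ z := (htime.add hvert).sub hhor
  rw [hphase.fderiv]
  simp
  ring

theorem fderiv_slabWeight (η T : ℝ) (k : ℕ) (z w : (E × ℝ) × ℝ) :
    fderiv ℝ (slabWeight η T k) z w =
      (k + 2) * max (slabPhase η T z) 0 ^ (k + 1) * fderiv ℝ (slabPhase η T) z w := by
  have hphase := ((contDiff_slabPhase η T).differentiable one_ne_zero z).hasFDerivAt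
  have hweight : HasFDerivAt (slabWeight η T k) _ z :=
    (hasDerivAt_max_zero_pow k (slabPhase η T z)).comp_hasFDerivAt z hphase
  rw [hweight.fderiv, smul_apply, smul_eq_mul]

end Weight

section DivergenceTheorem

/-- The closed cylinder over the ball of radius `ρ` in the layer `E × [-η, 0]`. -/
def layerCylinder (E : Type*) [NormedAddCommGroup E] (ρ η : ℝ) : Set (E × ℝ) :=
  closedBall 0 ρ ×ˢ Icc (-η) 0

theorem layerCylinder_mem_nhds {E : Type*} [NormedAddCommGroup E] {ρ η : ℝ} {y : E × ℝ}
    (hy : ‖y.1‖ < ρ) (hy' : y.2 ∈ Ioo (-η) 0) : layerCylinder E ρ η ∈ 𝓝 y :=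
  prod_mem_nhds (closedBall_mem_nhds_of_mem (mem_ball_zero_iff.2 hy))
    (Icc_mem_nhds hy'.1 hy'.2)

variable {ι E : Type*} [Fintype ι] [NormedAddCommGroup E] [InnerProductSpace ℝ E]
  {η T r ρ : ℝ} {q : (E × ℝ) × ℝ → ℝ} {A : E × ℝ → E} {B : E × ℝ → ℝ}
  (b : OrthonormalBasis ι ℝ E)

theorem IsSlabTestFunction.mul_comp_fst (hq : IsSlabTestFunction η T r q) (hr : r < ρ)
    (hB : ContDiffOn ℝ 1 B (layerCylinder E ρ η)) :
    IsSlabTestFunction η T r fun z => q z * B z.1 := by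
  refine .of_contDiffOn_cylinder hr (.mul ?_ ?_) fun z hz hzr => ?_
  · exact hq.contDiffOn.mono (prod_mono (prod_mono (subset_univ _) subset_rfl) subset_rfl)
  · exact hB.comp contDiff_fst.contDiffOn fun z hz => hz.1
  · rw [hq.eq_zero z hz hzr, zero_mul]

/-- The divergence of the time-independent field with horizontal part `A` and vertical part `B`. -/
def layerDivergence (A : E × ℝ → E) (B : E × ℝ → ℝ) (y : E × ℝ) : ℝ :=
  ∑ i, ⟪b i, fderiv ℝ A y (b i, 0)⟫ + fderiv ℝ B y (0, 1)

/-- The space-time divergence of `q · (A, B, 1)`. -/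
def slabFlux (q : (E × ℝ) × ℝ → ℝ) (A : E × ℝ → E) (B : E × ℝ → ℝ) (z : (E × ℝ) × ℝ) : ℝ :=
  ∑ i, fderiv ℝ (fun z => q z * ⟪b i, A z.1⟫) z ((b i, 0), 0)
    + fderiv ℝ (fun z => q z * B z.1) z ((0, 1), 0) + fderiv ℝ q z ((0, 0), 1)

theorem fderiv_mul_comp_fst {g : E × ℝ → ℝ} {z : (E × ℝ) × ℝ} (hq : DifferentiableAt ℝ q z)
    (hg : DifferentiableAt ℝ g z.1) (w : (E × ℝ) × ℝ) :
    fderiv ℝ (fun z => q z * g z.1) z w = q z * fderiv ℝ g z.1 w.1 + g z.1 * fderiv ℝ q z w := by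
  have hg' : HasFDerivAt (fun z : (E × ℝ) × ℝ => g z.1) _ z :=
    hg.hasFDerivAt.comp z hasFDerivAt_fst
  rw [(hq.hasFDerivAt.fun_mul hg').fderiv]
  simp

theorem slabFlux_eq {z : (E × ℝ) × ℝ} (hq : DifferentiableAt ℝ q z)
    (hA : DifferentiableAt ℝ A z.1) (hB : DifferentiableAt ℝ B z.1) :
    slabFlux b q A B z =
      fderiv ℝ q z ((A z.1, B z.1), 1) + q z * layerDivergence b A B z.1 := by
  have hA_coord (i : ι) : HasFDerivAt (fun y => ⟪b i, A y⟫) _ z.1 :=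
    (innerSL ℝ (b i)).hasFDerivAt.comp z.1 hA.hasFDerivAt
  have hsplit : ((A z.1, B z.1), (1 : ℝ)) = ∑ i, ⟪b i, A z.1⟫ • ((b i, (0 : ℝ)), (0 : ℝ))
      + B z.1 • ((0, 1), 0) + ((0, 0), 1) := by
    refine Prod.ext (Prod.ext ?_ ?_) ?_
    · simp [Prod.fst_sum, b.sum_repr']
    · simp [Prod.fst_sum, Prod.snd_sum]
    · simp [Prod.snd_sum]
  simp only [slabFlux, layerDivergence, fderiv_mul_comp_fst hq hB,
    fun i => fderiv_mul_comp_fst hq (hA_coord i).differentiableAt, (hA_coord _).fderiv]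
  rw [hsplit, map_add, map_add, map_sum, Finset.sum_add_distrib, ← Finset.mul_sum]
  simp only [map_smul, smul_eq_mul, ContinuousLinearMap.comp_apply, innerSL_apply_apply]
  ring

theorem slabFlux_eq_zero (hq : IsSlabTestFunction η T r q) {z : (E × ℝ) × ℝ}
    (hz : z ∈ interior (slab E η T)) (hr : r < ‖z.1.1‖) : slabFlux b q A B z = 0 := by
  have hmul (g : E × ℝ → ℝ) : fderiv ℝ (fun z => q z * g z.1) z = 0 := by
    have hqg : (fun z => q z * g z.1) =ᶠ[𝓝 z] fun _ => 0 := by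
      filter_upwards [hq.eventuallyEq_zero hz hr] with w hw
      rw [hw, zero_mul]
    rw [hqg.fderiv_eq, fderiv_fun_const, Pi.zero_apply]
  simp [slabFlux, hmul B, hq.fderiv_eq_zero hz hr, fun i => hmul fun y => ⟪b i, A y⟫]

variable [FiniteDimensional ℝ E] [MeasurableSpace E] [BorelSpace E]

theorem integrable_slabFlux (hq : IsSlabTestFunction η T r q) (hr : r < ρ)
    (hA : ContDiffOn ℝ 1 A (layerCylinder E ρ η)) (hB : ContDiffOn ℝ 1 B (layerCylinder E ρ η)) :
    Integrable (slabFlux b q A B) (slabMeasure E η T) :=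
  ((integrable_finsetSum _ fun i _ => (hq.mul_comp_fst hr
    ((innerSL ℝ (b i)).contDiff.comp_contDiffOn hA)).integrable_fderiv_apply _).add
    ((hq.mul_comp_fst hr hB).integrable_fderiv_apply _)).add (hq.integrable_fderiv_apply _)

theorem integral_slabFlux (hη : 0 ≤ η) (hT : 0 ≤ T) (hq : IsSlabTestFunction η T r q) (hr : r < ρ)
    (hA : ContDiffOn ℝ 1 A (layerCylinder E ρ η)) (hB : ContDiffOn ℝ 1 B (layerCylinder E ρ η))
    (hqT : ∀ y : E × ℝ, y.2 ∈ Ioo (-η) 0 → q (y, T) = 0)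
    (hqη : ∀ (x : E), ∀ t ∈ Ioo 0 T, q ((x, -η), t) = 0) :
    ∫ z, slabFlux b q A B z ∂slabMeasure E η T =
      (∫ t in Ioo 0 T, ∫ x, q ((x, 0), t) * B (x, 0)) - ∫ y, q (y, 0) ∂layerMeasure E η := by
  have hqA (i : ι) : IsSlabTestFunction η T r fun z => q z * ⟪b i, A z.1⟫ :=
    hq.mul_comp_fst hr ((innerSL ℝ (b i)).contDiff.comp_contDiffOn hA)
  have hqB := hq.mul_comp_fst hr hB
  have hhor := integrable_finsetSum Finset.univ fun i _ =>
    (hqA i).integrable_fderiv_apply ((b i, 0), 0)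
  have hvert := hqB.integrable_fderiv_apply ((0, 1), 0)
  have htime := hq.integrable_fderiv_apply ((0, 0), 1)
  have hspace : Integrable (fun z =>
      ∑ i, fderiv ℝ (fun z => q z * ⟪b i, A z.1⟫) z ((b i, 0), 0)
        + fderiv ℝ (fun z => q z * B z.1) z ((0, 1), 0)) (slabMeasure E η T) := hhor.add hvert
  simp only [slabFlux]
  rw [integral_add hspace htime, integral_add hhor hvert,
    integral_finsetSum _ fun i _ => (hqA i).integrable_fderiv_apply _,
    Finset.sum_eq_zero fun i _ => (hqA i).integral_fderiv_horizontal (b i),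
    hqB.integral_fderiv_vertical hη fun x t ht => by rw [hqη x t ht, zero_mul],
    hq.integral_fderiv_time hT hqT]
  ring

end DivergenceTheorem

section Energy

theorem neg_add_le_two_mul_mul {V D C e lam : ℝ} (hlam : 0 < lam) (hD : |D| ≤ C * |V| + e) :
    -((2 * C + lam) * V ^ 2 + lam⁻¹ * e ^ 2) ≤ 2 * V * D := by
  have hprod : -(2 * |V| * (C * |V| + e)) ≤ 2 * V * D := by
    have habs := neg_abs_le (V * D)
    rw [abs_mul] at habs
    nlinarith [mul_le_mul_of_nonneg_left hD (abs_nonneg V)]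
  have hyoung : 2 * |V| * e ≤ lam * |V| ^ 2 + lam⁻¹ * e ^ 2 := by
    have hsq : 0 ≤ lam * (|V| - lam⁻¹ * e) ^ 2 := by positivity
    have hexpand : lam * (|V| - lam⁻¹ * e) ^ 2 =
        lam * |V| ^ 2 - 2 * |V| * e + lam⁻¹ * e ^ 2 := by
      field_simp
      ring
    linarith
  rw [← sq_abs V]
  linarith

theorem neg_source_le_weighted_flux {V D W W' τ δ C K e γ lam : ℝ} (hlam : 0 < lam) (hW : 0 ≤ W)
    (hD : |D| ≤ C * |V| + e) (hτ : γ ≤ τ) (hδ : |δ| ≤ K)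
    (hWW' : (2 * C + K + lam) * W ≤ W' * γ) (hW' : 0 ≤ W') :
    -(lam⁻¹ * (e ^ 2 * W)) ≤ 2 * V * D * W + V ^ 2 * (W' * τ) + V ^ 2 * W * δ := by
  have htransport := mul_le_mul_of_nonneg_right (neg_add_le_two_mul_mul hlam hD) hW
  have hweight : (2 * C + K + lam) * W ≤ W' * τ :=
    hWW'.trans (mul_le_mul_of_nonneg_left hτ hW')
  have hgain := mul_le_mul_of_nonneg_left hweight (sq_nonneg V)
  have hdiv := mul_le_mul_of_nonneg_left (abs_le.1 hδ).1 (mul_nonneg (sq_nonneg V) hW)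
  nlinarith

variable {ι E : Type*} [Fintype ι] [NormedAddCommGroup E] [InnerProductSpace ℝ E]

/-- The transport inequality `|∂ₜ v + A · ∇ₓ v + B ∂ₛ v| ≤ C |v| + F(x, s) g(t)` in the slab over
the ball of radius `ρ`. The field `(A, B)` has divergence at most `K`, and the phase grows along it
at rate at least `γ`. -/
structure IsSlabTransportInequality (b : OrthonormalBasis ι ℝ E) (η T ρ γ C K : ℝ)
    (v : (E × ℝ) × ℝ → ℝ) (A : E × ℝ → E) (B F : E × ℝ → ℝ) (g : ℝ → ℝ) : Prop where
  contDiffOn : ContDiffOn ℝ 1 v (layerCylinder E ρ η ×ˢ Icc 0 T)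
  contDiffOn_horizontal : ContDiffOn ℝ 1 A (layerCylinder E ρ η)
  contDiffOn_vertical : ContDiffOn ℝ 1 B (layerCylinder E ρ η)
  continuousOn_source : ContinuousOn F (layerCylinder E ρ η)
  integrableOn_sq : IntegrableOn (fun t => g t ^ 2) (Ioo 0 T)
  abs_layerDivergence_le : ∀ y : E × ℝ, ‖y.1‖ < ρ → y.2 ∈ Ioo (-η) 0 →
    |layerDivergence b A B y| ≤ K
  le_phase_speed : ∀ y : E × ℝ, ‖y.1‖ < ρ → y.2 ∈ Ioo (-η) 0 →
    γ ≤ B y - 2 * ⟪y.1, A y⟫ - η / T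
  abs_fderiv_le : ∀ z ∈ interior (slab E η T), ‖z.1.1‖ < ρ →
    |fderiv ℝ v z ((A z.1, B z.1), 1)| ≤ C * |v z| + F z.1 * g z.2

variable {b : OrthonormalBasis ι ℝ E} {η T ρ γ C K lam : ℝ} {k : ℕ} {v : (E × ℝ) × ℝ → ℝ}
  {A : E × ℝ → E} {B F : E × ℝ → ℝ} {g : ℝ → ℝ}

theorem fderiv_sq_mul_slabWeight {z : (E × ℝ) × ℝ} (hv : DifferentiableAt ℝ v z)
    (w : (E × ℝ) × ℝ) :
    fderiv ℝ (fun z => v z ^ 2 * slabWeight η T k z) z w =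
      2 * v z * fderiv ℝ v z w * slabWeight η T k z +
        v z ^ 2 * ((k + 2) * max (slabPhase η T z) 0 ^ (k + 1) *
          (w.1.2 - 2 * ⟪z.1.1, w.1.1⟫ - η / T * w.2)) := by
  have hweight := ((contDiff_slabWeight η T k).differentiable one_ne_zero z).hasFDerivAt
  have hprod : HasFDerivAt (fun z => v z ^ 2 * slabWeight η T k z) _ z :=
    (hv.hasFDerivAt.pow 2).mul hweight
  rw [hprod.fderiv, ← fderiv_slabPhase, ← fderiv_slabWeight]
  simp
  ring

theorem isSlabTestFunction_sq_mul_slabWeight (hη : 0 ≤ η) (hηρ : √η < ρ)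
    (hv : ContDiffOn ℝ 1 v (layerCylinder E ρ η ×ˢ Icc 0 T)) :
    IsSlabTestFunction η T √η fun z => v z ^ 2 * slabWeight η T k z :=
  .of_contDiffOn_cylinder hηρ ((hv.pow 2).mul (contDiff_slabWeight η T k).contDiffOn)
    fun z hz hnorm => by rw [slabWeight_eq_zero_of_sqrt_le_norm hη hz hnorm, mul_zero]

namespace IsSlabTransportInequality

theorem neg_source_le_slabFlux_of_norm_lt (h : IsSlabTransportInequality b η T ρ γ C K v A B F g)
    (hη : 0 < η) (hγ : 0 ≤ γ) (hlam : 0 < lam) (hk : 2 * C + K + lam ≤ (k + 2) / η * γ)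
    {z : (E × ℝ) × ℝ} (hz : z ∈ interior (slab E η T)) (hzρ : ‖z.1.1‖ < ρ) :
    -(lam⁻¹ * ((F z.1 * g z.2) ^ 2 * slabWeight η T k z)) ≤
      slabFlux b (fun z => v z ^ 2 * slabWeight η T k z) A B z := by
  obtain ⟨hs, ht⟩ := mem_interior_slab.1 hz
  have hy : layerCylinder E ρ η ∈ 𝓝 z.1 := layerCylinder_mem_nhds hzρ hs
  have hv : DifferentiableAt ℝ v z :=
    (h.contDiffOn.contDiffAt (prod_mem_nhds hy (Icc_mem_nhds ht.1 ht.2))).differentiableAt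
      one_ne_zero
  have hweight := ((contDiff_slabWeight η T k).differentiable one_ne_zero z : DifferentiableAt ℝ
    (slabWeight η T k) z)
  rw [slabFlux_eq b ((hv.fun_pow 2).fun_mul hweight)
    ((h.contDiffOn_horizontal.contDiffAt hy).differentiableAt one_ne_zero)
    ((h.contDiffOn_vertical.contDiffAt hy).differentiableAt one_ne_zero),
    fderiv_sq_mul_slabWeight hv]
  refine neg_source_le_weighted_flux hlam (slabWeight_nonneg η T k z) (h.abs_fderiv_le z hz hzρ)
    (by simpa only [mul_one] using h.le_phase_speed z.1 hzρ hs)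
    (h.abs_layerDivergence_le z.1 hzρ hs) ?_ (by positivity)
  calc (2 * C + K + lam) * slabWeight η T k z ≤ (k + 2) / η * γ * slabWeight η T k z :=
        mul_le_mul_of_nonneg_right hk (slabWeight_nonneg η T k z)
    _ = (k + 2) / η * slabWeight η T k z * γ := by ring
    _ ≤ _ := mul_le_mul_of_nonneg_right (div_mul_slabWeight_le hη (interior_subset hz)) hγ

theorem neg_source_le_slabFlux (h : IsSlabTransportInequality b η T ρ γ C K v A B F g)
    (hη : 0 < η) (hηρ : √η < ρ) (hγ : 0 ≤ γ) (hlam : 0 < lam)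
    (hk : 2 * C + K + lam ≤ (k + 2) / η * γ)
    {z : (E × ℝ) × ℝ} (hz : z ∈ interior (slab E η T)) :
    -(lam⁻¹ * (F z.1 ^ 2 * slabWeight η T k (z.1, 0) * g z.2 ^ 2)) ≤
      slabFlux b (fun z => v z ^ 2 * slabWeight η T k z) A B z := by
  rcases lt_or_ge ‖z.1.1‖ ρ with hzρ | hzρ
  · refine le_trans ?_ (h.neg_source_le_slabFlux_of_norm_lt hη hγ hlam hk hz hzρ)
    rw [mul_right_comm, ← mul_pow]
    gcongr
    exact slabWeight_le_initial hη.le (interior_subset hz)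
  · rw [slabFlux_eq_zero b (isSlabTestFunction_sq_mul_slabWeight hη.le hηρ h.contDiffOn) hz
      (hηρ.trans_le hzρ), neg_nonpos]
    have hweight := slabWeight_nonneg η T k (z.1, 0)
    positivity

end IsSlabTransportInequality

variable [FiniteDimensional ℝ E] [MeasurableSpace E] [BorelSpace E]

theorem integrable_mul_slabWeight_initial (hη : 0 ≤ η) (hT : 0 ≤ T) (hηρ : √η < ρ)
    (hF : ContinuousOn F (layerCylinder E ρ η)) :
    Integrable (fun y => F y * slabWeight η T k (y, 0)) (layerMeasure E η) := by
  rw [layerMeasure_eq_restrict]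
  have hcylinder : IntegrableOn (fun y => F y * slabWeight η T k (y, 0)) (layerCylinder E ρ η) :=
    ContinuousOn.integrableOn_compact ((isCompact_closedBall _ _).prod isCompact_Icc)
      (hF.mul ((contDiff_slabWeight η T k).continuous.comp (by fun_prop)).continuousOn)
  refine (hcylinder.mono_set (prod_mono subset_rfl Ioo_subset_Icc_self)).of_forall_sdiff_eq_zero
    (MeasurableSet.univ.prod measurableSet_Ioo) fun y hy => ?_
  have hnorm : ρ ≤ ‖y.1‖ :=
    (not_lt.1 fun hlt => hy.2 ⟨mem_closedBall_zero_iff.2 hlt.le, hy.1.2⟩)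
  rw [slabWeight_eq_zero_of_sqrt_le_norm hη
    ⟨⟨mem_univ _, Ioo_subset_Icc_self hy.1.2⟩, left_mem_Icc.2 hT⟩ (hηρ.le.trans hnorm), mul_zero]

/-- The energy of `F` on the layer, weighted by `slabWeight η T k` at time `0`. -/
def initialEnergy (η T : ℝ) (k : ℕ) (F : E × ℝ → ℝ) : ℝ :=
  ∫ y, F y ^ 2 * slabWeight η T k (y, 0) ∂layerMeasure E η

theorem initialEnergy_nonneg (η T : ℝ) (k : ℕ) (F : E × ℝ → ℝ) : 0 ≤ initialEnergy η T k F :=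
  integral_nonneg fun _ => mul_nonneg (sq_nonneg _) (slabWeight_nonneg _ _ _ _)

theorem IsSlabTransportInequality.weighted_energy_le
    (h : IsSlabTransportInequality b η T ρ γ C K v A B F g) (hη : 0 < η) (hT : 0 < T)
    (hηρ : √η < ρ) (hγ : 0 ≤ γ) (hlam : 0 < lam) (hk : 2 * C + K + lam ≤ (k + 2) / η * γ) :
    initialEnergy η T k (fun y => v (y, 0)) ≤
      (∫ t in Ioo 0 T, ∫ x, v ((x, 0), t) ^ 2 * slabWeight η T k ((x, 0), t) * B (x, 0)) +
      lam⁻¹ * (initialEnergy η T k F * ∫ t in Ioo 0 T, g t ^ 2) := by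
  have htest : IsSlabTestFunction η T √η fun z => v z ^ 2 * slabWeight η T k z :=
    isSlabTestFunction_sq_mul_slabWeight hη.le hηρ h.contDiffOn
  have hflux := integral_slabFlux b hη.le hT.le htest hηρ h.contDiffOn_horizontal
    h.contDiffOn_vertical
    (fun y hy => by rw [slabWeight_eq_zero (slabPhase_terminal_nonpos hT.ne' hy.2.le), mul_zero])
    (fun x t ht => by
      rw [slabWeight_eq_zero (slabPhase_bottom_nonpos hη.le (Ioo_subset_Icc_self ht)), mul_zero])
  have hsource : Integrable (fun z : (E × ℝ) × ℝ =>
      F z.1 ^ 2 * slabWeight η T k (z.1, 0) * g z.2 ^ 2) (slabMeasure E η T) :=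
    (integrable_mul_slabWeight_initial hη.le hT.le hηρ (h.continuousOn_source.pow 2)).mul_prod
      h.integrableOn_sq
  have hlower := integral_mono_ae (hsource.const_mul lam⁻¹).neg
    (integrable_slabFlux b htest hηρ h.contDiffOn_horizontal h.contDiffOn_vertical)
    ((ae_slabMeasure_mem_interior E η T).mono fun z hz =>
      h.neg_source_le_slabFlux hη hηρ hγ hlam hk hz)
  have hfubini : ∫ z, F z.1 ^ 2 * slabWeight η T k (z.1, 0) * g z.2 ^ 2 ∂slabMeasure E η T =
      initialEnergy η T k F * ∫ t in Ioo 0 T, g t ^ 2 :=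
    integral_prod_mul (fun y => F y ^ 2 * slabWeight η T k (y, 0)) fun t => g t ^ 2
  simp only [Pi.neg_apply] at hlower
  rw [integral_neg, integral_const_mul, hfubini, hflux] at hlower
  rw [initialEnergy]
  linarith

end Energy

section Graph

variable {d : ℕ} {ℓ : Esp d → ℝ}

@[simp] theorem graphMk_castSucc (x : Esp d) (s : ℝ) (i : Fin d) :
    graphMk d x s i.castSucc = x i := by
  simp [graphMk]

@[simp] theorem graphMk_last (x : Esp d) (s : ℝ) : graphMk d x s (Fin.last d) = s := by
  simp [graphMk]

/-- `graphMk` as a continuous linear equivalence. Its inverse splits a vector of `ℝ^{d+1}` into its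
horizontal and vertical components. -/
def graphEquiv (d : ℕ) : (Esp d × ℝ) ≃L[ℝ] Esp (d + 1) :=
  LinearEquiv.toContinuousLinearEquiv
    { toFun := fun y => graphMk d y.1 y.2
      invFun := fun x => (WithLp.toLp 2 fun i => x i.castSucc, x (Fin.last d))
      map_add' := fun y z => by ext i; refine Fin.lastCases ?_ (fun j => ?_) i <;> simp
      map_smul' := fun r y => by ext i; refine Fin.lastCases ?_ (fun j => ?_) i <;> simp
      left_inv := fun y => by ext <;> simp
      right_inv := fun x => by ext i; refine Fin.lastCases ?_ (fun j => ?_) i <;> simp }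

theorem graphEquiv_apply (y : Esp d × ℝ) : graphEquiv d y = graphMk d y.1 y.2 := rfl

theorem graphMk_symm (x : Esp (d + 1)) :
    graphMk d ((graphEquiv d).symm x).1 ((graphEquiv d).symm x).2 = x :=
  (graphEquiv d).apply_symm_apply x

@[simp] theorem graphEquiv_symm_graphMk (x : Esp d) (s : ℝ) :
    (graphEquiv d).symm (graphMk d x s) = (x, s) :=
  (graphEquiv d).symm_apply_apply (x, s)

theorem inner_graphMk (x : Esp d) (s : ℝ) (y : Esp (d + 1)) :
    ⟪graphMk d x s, y⟫ = ⟪x, ((graphEquiv d).symm y).1⟫ + s * ((graphEquiv d).symm y).2 := by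
  obtain ⟨z, rfl⟩ := (graphEquiv d).surjective y
  simp only [graphEquiv_apply, graphEquiv_symm_graphMk, PiLp.inner_apply, Fin.sum_univ_castSucc,
    graphMk_castSucc, graphMk_last]
  simp [mul_comm]

theorem norm_graphMk_sq (x : Esp d) (s : ℝ) : ‖graphMk d x s‖ ^ 2 = ‖x‖ ^ 2 + s ^ 2 := by
  rw [← real_inner_self_eq_norm_sq, inner_graphMk, graphEquiv_symm_graphMk,
    real_inner_self_eq_norm_sq, sq s]

theorem norm_graphMk_zero_right (x : Esp d) : ‖graphMk d x 0‖ = ‖x‖ := by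
  rw [← sq_eq_sq₀ (norm_nonneg _) (norm_nonneg _), norm_graphMk_sq]
  ring

theorem norm_graphMk_zero_left (s : ℝ) : ‖graphMk d 0 s‖ = |s| := by
  rw [← sq_eq_sq₀ (norm_nonneg _) (abs_nonneg _), norm_graphMk_sq, norm_zero, sq_abs]
  ring

theorem norm_graphEquiv_symm_fst_le (x : Esp (d + 1)) : ‖((graphEquiv d).symm x).1‖ ≤ ‖x‖ := by
  have hsplit := norm_graphMk_sq ((graphEquiv d).symm x).1 ((graphEquiv d).symm x).2
  rw [graphMk_symm] at hsplit
  rw [← sq_le_sq₀ (norm_nonneg _) (norm_nonneg x), hsplit]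
  exact le_add_of_nonneg_right (sq_nonneg _)

theorem measurePreserving_graphEquiv (d : ℕ) : MeasurePreserving (graphEquiv d) := by
  let e : WithLp 2 (Esp d × ℝ) ≃ₗᵢ[ℝ] Esp (d + 1) :=
    { toLinearEquiv := (WithLp.linearEquiv 2 ℝ (Esp d × ℝ)).trans (graphEquiv d).toLinearEquiv
      norm_map' := fun z => by
        refine (sq_eq_sq₀ (norm_nonneg _) (norm_nonneg _)).1 ?_
        rw [WithLp.prod_norm_sq_eq_of_L2]
        exact (norm_graphMk_sq _ _).trans (by simp) }
  exact e.measurePreserving.comp (WithLp.volume_preserving_toLp (Esp d) ℝ)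

/-- The coordinates `(x, s) ↦ (x, ℓ(x) + s)` that flatten the graph of `ℓ` to `{s = 0}`. -/
def graphFlat (ℓ : Esp d → ℝ) (y : Esp d × ℝ) : Esp (d + 1) := graphMk d y.1 (ℓ y.1 + y.2)

theorem graphFlat_eq (ℓ : Esp d → ℝ) (y : Esp d × ℝ) :
    graphFlat ℓ y = graphEquiv d (y.1, ℓ y.1 + y.2) := rfl

theorem graphFlat_zero (hℓ0 : ℓ 0 = 0) : graphFlat ℓ 0 = 0 := by
  rw [graphFlat_eq, Prod.fst_zero, hℓ0, Prod.snd_zero, add_zero]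
  exact map_zero (graphEquiv d)

theorem hasFDerivAt_graphFlat {y : Esp d × ℝ} (h : DifferentiableAt ℝ ℓ y.1) :
    HasFDerivAt (graphFlat ℓ) ((graphEquiv d : (Esp d × ℝ) →L[ℝ] Esp (d + 1)).comp
      ((ContinuousLinearMap.fst ℝ (Esp d) ℝ).prod
        ((fderiv ℝ ℓ y.1).comp (ContinuousLinearMap.fst ℝ (Esp d) ℝ)
          + ContinuousLinearMap.snd ℝ (Esp d) ℝ))) y := by
  have hheight : HasFDerivAt (fun y : Esp d × ℝ => ℓ y.1) _ y :=
    h.hasFDerivAt.comp y hasFDerivAt_fst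
  exact (graphEquiv d : (Esp d × ℝ) →L[ℝ] Esp (d + 1)).hasFDerivAt.comp y
    (hasFDerivAt_fst.prodMk (hheight.add hasFDerivAt_snd))

theorem fderiv_graphFlat_apply {y : Esp d × ℝ} (h : DifferentiableAt ℝ ℓ y.1) (w : Esp d × ℝ) :
    fderiv ℝ (graphFlat ℓ) y w = graphMk d w.1 (fderiv ℝ ℓ y.1 w.1 + w.2) := by
  rw [(hasFDerivAt_graphFlat h).fderiv]
  rfl

theorem contDiffOn_graphFlat {S : Set (Esp d × ℝ)} {n : WithTop ℕ∞}
    (h : ContDiffOn ℝ n ℓ (Prod.fst '' S)) : ContDiffOn ℝ n (graphFlat ℓ) S :=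
  (graphEquiv d).contDiff.comp_contDiffOn <| contDiff_fst.contDiffOn.prodMk <|
    (h.comp contDiff_fst.contDiffOn (mapsTo_image _ _)).add contDiff_snd.contDiffOn

theorem measurePreserving_graphFlat (hℓ : Measurable ℓ) : MeasurePreserving (graphFlat ℓ) := by
  have hshear : MeasurePreserving fun y : Esp d × ℝ => (y.1, ℓ y.1 + y.2) :=
    (MeasurePreserving.id (volume : Measure (Esp d))).skew_product (g := fun x s => ℓ x + s)
      (by fun_prop) (.of_forall fun x => (measurePreserving_add_left volume (ℓ x)).map_eq)
  exact (measurePreserving_graphEquiv d).comp hshear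

theorem injective_graphFlat (ℓ : Esp d → ℝ) : Function.Injective (graphFlat ℓ) := by
  intro y z h
  simp only [graphFlat_eq, EmbeddingLike.apply_eq_iff_eq, Prod.mk.injEq] at h
  exact Prod.ext h.1 (add_left_cancel (h.1 ▸ h.2 : ℓ y.1 + y.2 = ℓ y.1 + z.2))

theorem measurableEmbedding_graphFlat (hℓ : Measurable ℓ) : MeasurableEmbedding (graphFlat ℓ) :=
  (measurePreserving_graphFlat hℓ).measurable.measurableEmbedding (injective_graphFlat ℓ)

end Graph

section Drift

variable {d : ℕ} {ℓ : Esp d → ℝ} {H : Esp (d + 1) → Esp (d + 1)} {y : Esp d × ℝ}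

/-- The upward normal `(-∇ℓ, 1)` of the graph of `ℓ`, not normalised. -/
def graphNormal (ℓ : Esp d → ℝ) (x : Esp d) : Esp (d + 1) := graphMk d (-(gradient ℓ x)) 1

/-- The horizontal component of the vector field `H` in the coordinates `graphFlat ℓ`. -/
def driftHor (ℓ : Esp d → ℝ) (H : Esp (d + 1) → Esp (d + 1)) (y : Esp d × ℝ) : Esp d :=
  ((graphEquiv d).symm (H (graphFlat ℓ y))).1

/-- The vertical component of the vector field `H` in the coordinates `graphFlat ℓ`. -/
def driftVer (ℓ : Esp d → ℝ) (H : Esp (d + 1) → Esp (d + 1)) (y : Esp d × ℝ) : ℝ :=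
  ((graphEquiv d).symm (H (graphFlat ℓ y))).2 - fderiv ℝ ℓ y.1 (driftHor ℓ H y)

theorem norm_graphNormal (ℓ : Esp d → ℝ) (x : Esp d) : ‖graphNormal ℓ x‖ = omegaW d ℓ x := by
  rw [omegaW, ← Real.sqrt_sq (norm_nonneg (graphNormal ℓ x)), graphNormal, norm_graphMk_sq,
    norm_neg, one_pow, add_comm]

theorem driftVer_eq_inner (ℓ : Esp d → ℝ) (H : Esp (d + 1) → Esp (d + 1)) (y : Esp d × ℝ) :
    driftVer ℓ H y = ⟪H (graphFlat ℓ y), graphNormal ℓ y.1⟫ := by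
  rw [real_inner_comm, graphNormal, inner_graphMk, inner_neg_left, inner_gradient_left, one_mul,
    driftVer, driftHor]
  ring

theorem fderiv_graphFlat_drift (h : DifferentiableAt ℝ ℓ y.1) :
    fderiv ℝ (graphFlat ℓ) y (driftHor ℓ H y, driftVer ℓ H y) = H (graphFlat ℓ y) := by
  rw [fderiv_graphFlat_apply h, driftVer, add_sub_cancel, driftHor, graphMk_symm]

theorem fderiv_driftHor (hℓ : DifferentiableAt ℝ ℓ y.1)
    (hH : DifferentiableAt ℝ H (graphFlat ℓ y)) (w : Esp d × ℝ) :
    fderiv ℝ (driftHor ℓ H) y w = ((graphEquiv d).symm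
      (fderiv ℝ H (graphFlat ℓ y) (fderiv ℝ (graphFlat ℓ) y w))).1 := by
  have hflat := hasFDerivAt_graphFlat (y := y) hℓ
  have hcomp : HasFDerivAt (driftHor ℓ H) _ y :=
    ((graphEquiv d).symm.hasFDerivAt.comp y (hH.hasFDerivAt.comp y hflat)).fst
  rw [hcomp.fderiv, hflat.fderiv]
  rfl

theorem fderiv_driftVer_vertical (hℓ : DifferentiableAt ℝ ℓ y.1)
    (hdℓ : DifferentiableAt ℝ (fderiv ℝ ℓ) y.1) (hH : DifferentiableAt ℝ H (graphFlat ℓ y)) :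
    fderiv ℝ (driftVer ℓ H) y (0, 1) =
      ⟪graphNormal ℓ y.1, fderiv ℝ H (graphFlat ℓ y) (graphMk d 0 1)⟫ := by
  have hflat := hasFDerivAt_graphFlat (y := y) hℓ
  have hcomp := (graphEquiv d).symm.hasFDerivAt.comp y (hH.hasFDerivAt.comp y hflat)
  have hslope : HasFDerivAt (fun y : Esp d × ℝ => fderiv ℝ ℓ y.1) _ y :=
    hdℓ.hasFDerivAt.comp y (hasFDerivAt_fst (𝕜 := ℝ))
  have hver : HasFDerivAt (driftVer ℓ H) _ y := hcomp.snd.sub (hslope.clm_apply hcomp.fst)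
  rw [hver.fderiv, graphNormal, inner_graphMk, inner_neg_left, inner_gradient_left]
  simp [graphEquiv_apply, sub_eq_neg_add]

theorem layerDivergence_drift {ι : Type*} [Fintype ι] (b : OrthonormalBasis ι ℝ (Esp d))
    (hℓ : DifferentiableAt ℝ ℓ y.1) (hdℓ : DifferentiableAt ℝ (fderiv ℝ ℓ) y.1)
    (hH : DifferentiableAt ℝ H (graphFlat ℓ y)) :
    layerDivergence b (driftHor ℓ H) (driftVer ℓ H) y =
      ∑ i, ⟪graphMk d (b i) 0, fderiv ℝ H (graphFlat ℓ y) (graphMk d (b i) 0)⟫ +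
        ⟪graphMk d 0 1, fderiv ℝ H (graphFlat ℓ y) (graphMk d 0 1)⟫ := by
  set L := fderiv ℝ H (graphFlat ℓ y)
  have htangent : ∀ x : Esp d, fderiv ℝ (graphFlat ℓ) y (x, 0) =
      graphMk d x 0 + fderiv ℝ ℓ y.1 x • graphMk d 0 1 := fun x => by
    rw [fderiv_graphFlat_apply hℓ]
    ext i
    refine Fin.lastCases ?_ (fun j => ?_) i <;> simp
  have hexpand := b.sum_repr' ((graphEquiv d).symm (L (graphMk d 0 1))).1
  have hslope : ∑ i, fderiv ℝ ℓ y.1 (b i) * ⟪b i, ((graphEquiv d).symm (L (graphMk d 0 1))).1⟫ =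
      fderiv ℝ ℓ y.1 ((graphEquiv d).symm (L (graphMk d 0 1))).1 := by
    conv_rhs => rw [← hexpand, map_sum]
    simp [mul_comm]
  rw [layerDivergence, fderiv_driftVer_vertical hℓ hdℓ hH, graphNormal]
  simp only [fderiv_driftHor hℓ hH, htangent, inner_graphMk, map_add, map_smul, Prod.fst_add,
    Prod.smul_fst, inner_add_right, inner_smul_right, Finset.sum_add_distrib, inner_neg_left,
    inner_gradient_left, inner_zero_left, zero_mul, add_zero, zero_add, one_mul]
  rw [hslope]
  ring

theorem abs_layerDivergence_drift_le {ι : Type*} [Fintype ι] (b : OrthonormalBasis ι ℝ (Esp d))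
    (hℓ : DifferentiableAt ℝ ℓ y.1) (hdℓ : DifferentiableAt ℝ (fderiv ℝ ℓ) y.1)
    (hH : DifferentiableAt ℝ H (graphFlat ℓ y)) :
    |layerDivergence b (driftHor ℓ H) (driftVer ℓ H) y| ≤
      (Fintype.card ι + 1) * ‖fderiv ℝ H (graphFlat ℓ y)‖ := by
  have hunit : ∀ e : Esp (d + 1), ‖e‖ = 1 →
      |⟪e, fderiv ℝ H (graphFlat ℓ y) e⟫| ≤ ‖fderiv ℝ H (graphFlat ℓ y)‖ := fun e he => by
    simpa [he] using (abs_real_inner_le_norm e _).trans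
      (mul_le_mul_of_nonneg_left ((fderiv ℝ H (graphFlat ℓ y)).le_opNorm e) (norm_nonneg e))
  rw [layerDivergence_drift b hℓ hdℓ hH, add_mul, one_mul]
  refine (abs_add_le _ _).trans (add_le_add ?_ (hunit _ (by simp [norm_graphMk_zero_left])))
  calc |∑ i, ⟪graphMk d (b i) 0, fderiv ℝ H (graphFlat ℓ y) (graphMk d (b i) 0)⟫|
      ≤ ∑ i, |⟪graphMk d (b i) 0, fderiv ℝ H (graphFlat ℓ y) (graphMk d (b i) 0)⟫| :=
        Finset.abs_sum_le_sum_abs _ _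
    _ ≤ ∑ _i : ι, ‖fderiv ℝ H (graphFlat ℓ y)‖ :=
        Finset.sum_le_sum fun i _ => hunit _ (by rw [norm_graphMk_zero_right, b.norm_eq_one])
    _ = _ := by rw [Finset.sum_const, nsmul_eq_mul, Finset.card_univ]

theorem contDiffOn_driftHor {n : WithTop ℕ∞} {S : Set (Esp d × ℝ)} {U : Set (Esp (d + 1))}
    (hℓ : ContDiffOn ℝ n ℓ (Prod.fst '' S)) (hH : ContDiffOn ℝ n H U)
    (hSU : MapsTo (graphFlat ℓ) S U) : ContDiffOn ℝ n (driftHor ℓ H) S :=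
  ((graphEquiv d).symm.contDiff.comp_contDiffOn (hH.comp (contDiffOn_graphFlat hℓ) hSU)).fst

theorem contDiffOn_driftVer {n : WithTop ℕ∞} {S : Set (Esp d × ℝ)} {V : Set (Esp d)}
    {U : Set (Esp (d + 1))} (hV : IsOpen V) (hSV : ∀ y ∈ S, y.1 ∈ V)
    (hℓ : ContDiffOn ℝ (n + 1) ℓ V) (hH : ContDiffOn ℝ n H U) (hSU : MapsTo (graphFlat ℓ) S U) :
    ContDiffOn ℝ n (driftVer ℓ H) S := by
  have hheight : ContDiffOn ℝ n ℓ (Prod.fst '' S) :=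
    (hℓ.of_le le_self_add).mono (image_subset_iff.2 hSV)
  have hslope : ContDiffOn ℝ n (fun y : Esp d × ℝ => fderiv ℝ ℓ y.1) S :=
    (hℓ.fderiv_of_isOpen hV le_rfl).comp contDiff_fst.contDiffOn hSV
  exact ((graphEquiv d).symm.contDiff.comp_contDiffOn
    (hH.comp (contDiffOn_graphFlat hheight) hSU)).snd.sub
      (hslope.clm_apply (contDiffOn_driftHor hheight hH hSU))

theorem continuousAt_graphNormal {x : Esp d} (hℓ : ContDiffAt ℝ 1 ℓ x) :
    ContinuousAt (graphNormal ℓ) x := by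
  have hgrad : ContinuousAt (gradient ℓ) x :=
    (InnerProductSpace.toDual ℝ (Esp d)).symm.continuous.continuousAt.comp
      (hℓ.continuousAt_fderiv one_ne_zero)
  exact (graphEquiv d).continuous.continuousAt.comp
    (f := fun x => (-(gradient ℓ x), (1 : ℝ))) (hgrad.neg.prodMk continuousAt_const)

/-- For a field bounded, together with its derivative, by `M`, an upper bound for the amount by
which its phase speed at `y` falls short of its normal component at the origin. -/
def phaseSpeedLoss (M : ℝ) (ℓ : Esp d → ℝ) (y : Esp d × ℝ) : ℝ :=
  M * ‖graphFlat ℓ y‖ * ‖graphNormal ℓ y.1‖ + M * ‖graphNormal ℓ y.1 - graphNormal ℓ 0‖ +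
    2 * (‖y.1‖ * M)

theorem eventually_phaseSpeedLoss_le (M : ℝ) {ε : ℝ} (hε : 0 < ε) (hℓ : ContDiffAt ℝ 1 ℓ 0)
    (hℓ0 : ℓ 0 = 0) : ∀ᶠ y in 𝓝 0, phaseSpeedLoss M ℓ y ≤ ε := by
  have hnormal : ContinuousAt (fun y : Esp d × ℝ => graphNormal ℓ y.1) 0 :=
    (continuousAt_graphNormal (x := (0 : Esp d × ℝ).1) hℓ).comp continuousAt_fst
  have hflat : ContinuousAt (graphFlat ℓ) 0 :=
    (hasFDerivAt_graphFlat (y := 0) (hℓ.differentiableAt one_ne_zero)).continuousAt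
  have hloss : ContinuousAt (phaseSpeedLoss M ℓ) 0 := by
    unfold phaseSpeedLoss
    fun_prop
  refine (hloss.eventually_lt (continuousAt_const (y := ε)) ?_).mono fun y hy => hy.le
  simpa [phaseSpeedLoss, graphFlat_zero hℓ0] using hε

theorem le_inner_graphNormal_of_lt_inner_nuUp {δ : ℝ} {x : Esp d} {w : Esp (d + 1)} (hδ : 0 ≤ δ)
    (h : δ < ⟪w, nuUp d ℓ x⟫) : δ ≤ ⟪w, graphNormal ℓ x⟫ := by
  have hlen : 1 ≤ √(1 + ‖gradient ℓ x‖ ^ 2) := by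
    rw [Real.one_le_sqrt]
    linarith [sq_nonneg ‖gradient ℓ x‖]
  rw [nuUp, inner_smul_right, inv_mul_eq_div, lt_div_iff₀ (by linarith)] at h
  exact (le_mul_of_one_le_right hδ hlen).trans h.le

/-- `H` is `C¹` on an open convex neighbourhood of `K`, with `H` and its derivative bounded there
by `M`: admissibility without the lower bound on `‖H‖`. -/
def IsC1BoundedNear {n : ℕ} (M : ℝ) (K : Set (Esp n)) (H : Esp n → Esp n) : Prop :=
  ∃ U : Set (Esp n), IsOpen U ∧ Convex ℝ U ∧ K ⊆ U ∧ ContDiffOn ℝ 1 H U ∧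
    (∀ x ∈ U, ‖H x‖ ≤ M) ∧ ∀ x ∈ U, ‖fderiv ℝ H x‖ ≤ M

section IsC1BoundedNear

variable {n : ℕ} {M : ℝ} {K : Set (Esp n)} {G : Esp n → Esp n} {x x' : Esp n}

theorem IsAdmissible.isC1BoundedNear {δ : ℝ} (h : IsAdmissible M δ K G) :
    IsC1BoundedNear M K G :=
  let ⟨U, hUo, hU, hKU, hG, hGM, hdG, _⟩ := h
  ⟨U, hUo, hU, hKU, hG, hGM, hdG⟩

theorem IsC1BoundedNear.contDiffOn (h : IsC1BoundedNear M K G) : ContDiffOn ℝ 1 G K :=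
  let ⟨_, _, _, hKU, hG, _⟩ := h
  hG.mono hKU

theorem IsC1BoundedNear.differentiableAt (h : IsC1BoundedNear M K G) (hx : x ∈ K) :
    DifferentiableAt ℝ G x :=
  let ⟨_, hUo, _, hKU, hG, _⟩ := h
  (hG.contDiffAt (hUo.mem_nhds (hKU hx))).differentiableAt one_ne_zero

theorem IsC1BoundedNear.norm_le (h : IsC1BoundedNear M K G) (hx : x ∈ K) : ‖G x‖ ≤ M :=
  let ⟨_, _, _, hKU, _, hGM, _⟩ := h
  hGM x (hKU hx)

theorem IsC1BoundedNear.norm_fderiv_le (h : IsC1BoundedNear M K G) (hx : x ∈ K) :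
    ‖fderiv ℝ G x‖ ≤ M :=
  let ⟨_, _, _, hKU, _, _, hdG⟩ := h
  hdG x (hKU hx)

theorem IsC1BoundedNear.norm_sub_le (h : IsC1BoundedNear M K G) (hx : x ∈ K) (hx' : x' ∈ K) :
    ‖G x' - G x‖ ≤ M * ‖x' - x‖ :=
  let ⟨_, hUo, hU, hKU, hG, _, hdG⟩ := h
  hU.norm_image_sub_le_of_norm_fderiv_le
    (fun _ hy => (hG.contDiffAt (hUo.mem_nhds hy)).differentiableAt one_ne_zero) hdG
    (hKU hx) (hKU hx')

end IsC1BoundedNear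

theorem abs_inner_driftHor_le {M : ℝ} (hM : ‖H (graphFlat ℓ y)‖ ≤ M) :
    |⟪y.1, driftHor ℓ H y⟫| ≤ ‖y.1‖ * M :=
  (abs_real_inner_le_norm _ _).trans (mul_le_mul_of_nonneg_left
    ((norm_graphEquiv_symm_fst_le _).trans hM) (norm_nonneg _))

theorem sub_phaseSpeedLoss_add_le_driftVer {M : ℝ} {K : Set (Esp (d + 1))}
    (hH : IsC1BoundedNear M K H) (h0 : (0 : Esp (d + 1)) ∈ K) (hy : graphFlat ℓ y ∈ K) :
    ⟪H 0, graphNormal ℓ 0⟫ - phaseSpeedLoss M ℓ y + 2 * (‖y.1‖ * M) ≤ driftVer ℓ H y := by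
  have hlip : ‖H (graphFlat ℓ y) - H 0‖ ≤ M * ‖graphFlat ℓ y‖ := by
    simpa only [sub_zero] using hH.norm_sub_le h0 hy
  have hdrift : |⟪H (graphFlat ℓ y) - H 0, graphNormal ℓ y.1⟫| ≤
      M * ‖graphFlat ℓ y‖ * ‖graphNormal ℓ y.1‖ :=
    (abs_real_inner_le_norm _ _).trans (mul_le_mul_of_nonneg_right hlip (norm_nonneg _))
  have hnormal : |⟪H 0, graphNormal ℓ y.1 - graphNormal ℓ 0⟫| ≤
      M * ‖graphNormal ℓ y.1 - graphNormal ℓ 0‖ :=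
    (abs_real_inner_le_norm _ _).trans (mul_le_mul_of_nonneg_right (hH.norm_le h0) (norm_nonneg _))
  rw [inner_sub_left] at hdrift
  rw [inner_sub_right] at hnormal
  rw [driftVer_eq_inner, phaseSpeedLoss]
  linarith [(abs_le.1 hdrift).1, (abs_le.1 hnormal).1]

theorem sub_phaseSpeedLoss_le {M : ℝ} {K : Set (Esp (d + 1))}
    (hH : IsC1BoundedNear M K H) (h0 : (0 : Esp (d + 1)) ∈ K) (hy : graphFlat ℓ y ∈ K) :
    ⟪H 0, graphNormal ℓ 0⟫ - phaseSpeedLoss M ℓ y ≤ driftVer ℓ H y - 2 * ⟪y.1, driftHor ℓ H y⟫ := by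
  linarith [sub_phaseSpeedLoss_add_le_driftVer hH h0 hy,
    (abs_le.1 (abs_inner_driftHor_le (hH.norm_le hy))).2]

theorem exists_layerCylinder_forall {E : Type*} [NormedAddCommGroup E] {P : E × ℝ → Prop}
    (hP : ∀ᶠ y in 𝓝 0, P y) {ρ₀ ε : ℝ} (hρ₀ : 0 < ρ₀) (hε : 0 < ε) :
    ∃ ρ ∈ Ioo 0 ρ₀, ∃ η ∈ Ioo 0 ε, √η < ρ ∧ ∀ y ∈ layerCylinder E ρ η, P y := by
  obtain ⟨r, hr, hball⟩ := Metric.eventually_nhds_iff_ball.1 hP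
  obtain ⟨ρ, hρ0, hρ⟩ := exists_between (lt_min hr hρ₀)
  obtain ⟨η, hη0, hη⟩ := exists_between (lt_min hε (lt_min hρ0 (pow_pos hρ0 2)))
  rw [lt_min_iff] at hρ
  rw [lt_min_iff, lt_min_iff] at hη
  refine ⟨ρ, ⟨hρ0, hρ.2⟩, η, ⟨hη0, hη.1⟩, (Real.sqrt_lt' hρ0).2 hη.2.2, fun y hy => hball y ?_⟩
  rw [mem_ball_zero_iff, Prod.norm_def, max_lt_iff]
  refine ⟨(mem_closedBall_zero_iff.1 hy.1).trans_lt hρ.1, ?_⟩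
  rw [Real.norm_of_nonpos hy.2.2]
  linarith [hy.2.1]

end Drift

section Slices

theorem closure_prod_Icc_mem_nhds {X : Type*} [TopologicalSpace X] {Ω : Set X} (hΩ : IsOpen Ω)
    {x : X} (hx : x ∈ Ω) {T t : ℝ} (ht : t ∈ Ioo 0 T) : closure Ω ×ˢ Icc 0 T ∈ 𝓝 (x, t) :=
  prod_mem_nhds (Filter.mem_of_superset (hΩ.mem_nhds hx) subset_closure) (Icc_mem_nhds ht.1 ht.2)

variable {E F : Type*} [NormedAddCommGroup E] [NormedSpace ℝ E] [NormedAddCommGroup F]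
  [NormedSpace ℝ F] {f : E × ℝ → F} {f' : E × ℝ →L[ℝ] F} {x : E} {t : ℝ}

theorem hasFDerivAt_comp_prodMk_left (h : HasFDerivAt f f' (x, t)) :
    HasFDerivAt (fun z => f (z, t)) (f'.comp (ContinuousLinearMap.inl ℝ E ℝ)) x :=
  HasFDerivAt.comp x h (hasFDerivAt_prodMk_left x t)

theorem hasDerivAt_comp_prodMk_right (h : HasFDerivAt f f' (x, t)) :
    HasDerivAt (fun τ => f (x, τ)) (f' (0, 1)) t :=
  HasFDerivAt.comp_hasDerivAt t h ((hasDerivAt_const t x).prodMk (hasDerivAt_id t))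

theorem continuousOn_fderiv_comp_prodMk_left {Ω : Set E} {I : Set ℝ} (hΩ : IsOpen Ω)
    (hf : ContDiffOn ℝ 1 f (Ω ×ˢ I)) (hx : x ∈ Ω) :
    ContinuousOn (fun t => fderiv ℝ (fun z => f (z, t)) x) I := by
  intro t ht
  obtain ⟨V, hVo, hV, f', hf', hf'_cont⟩ :=
    exists_continuousOn_hasFDerivWithinAt_of_contDiffOn_one hf (mk_mem_prod hx ht)
  have hslice : ∀ τ ∈ I, (x, τ) ∈ V →
      fderiv ℝ (fun z => f (z, τ)) x = (f' (x, τ)).comp (ContinuousLinearMap.inl ℝ E ℝ) := by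
    intro τ hτ hτV
    have hwithin : HasFDerivWithinAt (fun z => f (z, τ)) _ Ω x :=
      (hf' _ ⟨hτV, hx, hτ⟩).comp x (hasFDerivAt_prodMk_left x τ).hasFDerivWithinAt
        fun z hz => mk_mem_prod hz hτ
    exact (hwithin.hasFDerivAt (hΩ.mem_nhds hx)).fderiv
  have hVt : ∀ᶠ τ in 𝓝[I] t, (x, τ) ∈ V ∩ Ω ×ˢ I :=
    ((Continuous.prodMk_right x).continuousWithinAt.eventually (hVo.mem_nhds hV)).and
      (Filter.eventually_of_mem self_mem_nhdsWithin fun τ hτ => mk_mem_prod hx hτ)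
  have hcont : Filter.Tendsto (fun τ => f' (x, τ)) (𝓝[I] t) (𝓝 (f' (x, t))) :=
    (hf'_cont _ ⟨hV, hx, ht⟩).tendsto.comp
      (tendsto_nhdsWithin_iff.2 ⟨(Continuous.prodMk_right x).continuousWithinAt, hVt⟩)
  rw [ContinuousWithinAt, hslice t ht hV]
  exact (((ContinuousLinearMap.compL ℝ E (E × ℝ) F).flip (ContinuousLinearMap.inl ℝ E ℝ)
    ).continuous.tendsto _).comp hcont |>.congr' <| by
      filter_upwards [hVt] with τ hτ using (hslice τ hτ.2.2 hτ.1).symm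

end Slices

section TimeDerivative

variable {E : Type*} [NormedAddCommGroup E] [NormedSpace ℝ E] {u : E → ℝ → ℝ} {x h : E} {t b : ℝ}
  {W' : E × ℝ →L[ℝ] ℝ}

theorem tendsto_inv_smul_sub_of_hasStrictFDerivAt {w : E × ℝ → ℝ}
    (hw : HasStrictFDerivAt w W' (x, t)) (h : E) :
    Filter.Tendsto (fun q : ℝ × ℝ => q.1⁻¹ • (w (x + q.1 • h, q.2) - w (x, q.2)))
      (𝓝[≠] 0 ×ˢ 𝓝 t) (𝓝 (W' (h, 0))) := by
  have hpair : Filter.Tendsto (fun q : ℝ × ℝ => ((x + q.1 • h, q.2), (x, q.2)))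
      (𝓝[≠] 0 ×ˢ 𝓝 t) (𝓝 ((x, t), (x, t))) := by
    have hcont : Continuous fun q : ℝ × ℝ => ((x + q.1 • h, q.2), (x, q.2)) := by fun_prop
    refine (Filter.Tendsto.mono_left (by simpa using hcont.tendsto (0, t)) ?_)
    rw [nhds_prod_eq]
    exact Filter.prod_mono_left _ nhdsWithin_le_nhds
  have hincrement : (fun q : ℝ × ℝ => (x + q.1 • h, q.2) - (x, q.2))
      =O[𝓝[≠] 0 ×ˢ 𝓝 t] fun q => q.1 := by
    refine .of_bound ‖h‖ (.of_forall fun q => ?_)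
    simp only [add_sub_cancel_left, Prod.mk_sub_mk, sub_self, Prod.norm_mk, norm_smul, norm_zero]
    rw [max_eq_left (by positivity), mul_comm]
  have hlittle := ((hw.isLittleO.comp_tendsto hpair).trans_isBigO hincrement)
  rw [← tendsto_sub_nhds_zero_iff]
  refine hlittle.tendsto_inv_smul_nhds_zero.congr' ?_
  have hne : ∀ᶠ q : ℝ × ℝ in 𝓝[≠] 0 ×ˢ 𝓝 t, q.1 ≠ 0 :=
    Filter.tendsto_fst.eventually self_mem_nhdsWithin
  filter_upwards [hne] with q hq
  have hdiff : W' ((x + q.1 • h, q.2) - (x, q.2)) = q.1 • W' (h, 0) := by rw [← map_smul]; simp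
  simp only [Function.comp_apply, hdiff, smul_sub, inv_smul_smul₀ hq]

-- The difference quotients in the direction `h` converge together with their `t`-derivatives.
theorem hasDerivAt_fderiv_comp_prodMk_left
    (hu : ∀ᶠ q in 𝓝 (x, t), DifferentiableAt ℝ (fun q : E × ℝ => u q.1 q.2) q)
    (hW : HasStrictFDerivAt (fun q : E × ℝ => deriv (u q.1) q.2) W' (x, t)) (h : E) :
    HasDerivAt (fun τ => fderiv ℝ (fun z => u z τ) x h) (W' (h, 0)) t := by
  have hpoint : Filter.Tendsto (fun q : ℝ × ℝ => (x + q.1 • h, q.2)) (𝓝[≠] 0 ×ˢ 𝓝 t)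
      (𝓝 (x, t)) := by
    have hcont : Continuous fun q : ℝ × ℝ => (x + q.1 • h, q.2) := by fun_prop
    refine (Filter.Tendsto.mono_left (by simpa using hcont.tendsto (0, t)) ?_)
    rw [nhds_prod_eq]
    exact Filter.prod_mono_left _ nhdsWithin_le_nhds
  have hux : ∀ᶠ τ in 𝓝 t, DifferentiableAt ℝ (fun q : E × ℝ => u q.1 q.2) (x, τ) :=
    (Continuous.prodMk_right x).tendsto t |>.eventually hu
  refine hasDerivAt_of_tendstoUniformlyOnFilter
    (l := 𝓝[≠] 0) (f := fun s τ => s⁻¹ • (u (x + s • h) τ - u x τ))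
    (f' := fun s τ => s⁻¹ • (deriv (u (x + s • h)) τ - deriv (u x) τ)) (g' := fun _ => W' (h, 0))
    (tendsto_prod_filter_iff.1 (tendsto_inv_smul_sub_of_hasStrictFDerivAt hW h)) ?_ ?_
  · filter_upwards [hpoint.eventually hu, Filter.tendsto_snd.eventually hux] with q hq hqx
    exact ((hasDerivAt_comp_prodMk_right hq.hasFDerivAt).differentiableAt.hasDerivAt.sub
      (hasDerivAt_comp_prodMk_right hqx.hasFDerivAt).differentiableAt.hasDerivAt).const_smul q.1⁻¹
  · filter_upwards [hux] with τ hτ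
    exact ((hasFDerivAt_comp_prodMk_left hτ.hasFDerivAt).differentiableAt.hasFDerivAt
      |>.hasLineDerivAt h).tendsto_slope_zero

theorem transport_eq_time_deriv
    (hu : ∀ᶠ q in 𝓝 (x, t), DifferentiableAt ℝ (fun q : E × ℝ => u q.1 q.2) q)
    (hW : HasStrictFDerivAt (fun q : E × ℝ => deriv (u q.1) q.2) W' (x, t))
    (hpde : ∀ᶠ τ in 𝓝 t, deriv (u x) τ + fderiv ℝ (fun z => u z τ) x h + b * u x τ = 0) :
    W' (h, 1) + b * deriv (u x) t = 0 := by
  have hux : HasDerivAt (u x) (deriv (u x) t) t :=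
    (hasDerivAt_comp_prodMk_right hu.self_of_nhds.hasFDerivAt).differentiableAt.hasDerivAt
  have hsum := ((hasDerivAt_comp_prodMk_right hW.hasFDerivAt).add
    (hasDerivAt_fderiv_comp_prodMk_left hu hW h)).add (hux.const_mul b)
  have hsplit : W' (h, 1) = W' (0, 1) + W' (h, 0) := by rw [← map_add]; simp
  rw [hsplit]
  exact hsum.unique ((hasDerivAt_const t (0 : ℝ)).congr_of_eventuallyEq hpde)

theorem transport_eq_initial {Ω : Set E} (hΩ : IsOpen Ω) {T : ℝ} (hT : 0 < T)
    (hu : ContDiffOn ℝ 1 (fun q : E × ℝ => u q.1 q.2) (Ω ×ˢ Icc 0 T))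
    (hW : ContinuousOn (fun q : E × ℝ => deriv (u q.1) q.2) (Ω ×ˢ Icc 0 T)) (hx : x ∈ Ω)
    (hpde : ∀ t ∈ Ioo 0 T, deriv (u x) t + fderiv ℝ (fun z => u z t) x h + b * u x t = 0) :
    deriv (u x) 0 + fderiv ℝ (fun z => u z 0) x h + b * u x 0 = 0 := by
  have hslice : MapsTo (fun t : ℝ => (x, t)) (Icc 0 T) (Ω ×ˢ Icc 0 T) :=
    fun t ht => mk_mem_prod hx ht
  have hcont : ContinuousOn (fun t => deriv (u x) t + fderiv ℝ (fun z => u z t) x h + b * u x t)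
      (Icc 0 T) :=
    ((hW.comp (Continuous.prodMk_right x).continuousOn hslice).add
      ((continuousOn_fderiv_comp_prodMk_left hΩ hu hx).clm_apply continuousOn_const)).add
        (continuousOn_const.mul
          (hu.continuousOn.comp (Continuous.prodMk_right x).continuousOn hslice))
  exact EqOn.of_subset_closure (f := fun t => _) (g := fun _ => 0) hpde hcont continuousOn_const
    Ioo_subset_Icc_self (closure_Ioo hT.ne).ge (left_mem_Icc.2 hT.le)

end TimeDerivative

section SpatialGradient

variable {E : Type*} [NormedAddCommGroup E] [InnerProductSpace ℝ E] [FiniteDimensional ℝ E]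
  {w : E → ℝ → ℝ} {Ω : Set E} {T : ℝ}

theorem norm_gradient (f : E → ℝ) (x : E) : ‖gradient f x‖ = ‖fderiv ℝ f x‖ := by
  simp [gradient]

theorem exists_norm_gradient_slice_le (hΩ : IsOpen Ω) (hΩb : Bornology.IsBounded Ω)
    (hw : ContDiffOn ℝ 1 (fun q : E × ℝ => w q.1 q.2) (closure Ω ×ˢ Icc 0 T)) :
    ∃ C : ℝ, ∀ x ∈ Ω, ∀ t ∈ Ioo 0 T, ‖gradient (fun z => w z t) x‖ ≤ C := by
  obtain ⟨C, hC⟩ := exists_norm_fderiv_interior_le_of_contDiffOn_one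
    (hΩb.isCompact_closure.prod isCompact_Icc) hw
  refine ⟨C, fun x hx t ht => ?_⟩
  have hmem := closure_prod_Icc_mem_nhds (T := T) hΩ hx ht
  have hslice := hasFDerivAt_comp_prodMk_left
    ((hw.contDiffAt hmem).differentiableAt one_ne_zero).hasFDerivAt
  rw [norm_gradient, hslice.fderiv]
  exact (ContinuousLinearMap.opNorm_comp_le _ _).trans
    ((mul_le_of_le_one_right (norm_nonneg _) (ContinuousLinearMap.norm_inl_le_one ℝ E ℝ)).trans
      (hC _ (mem_interior_iff_mem_nhds.2 hmem)))

theorem norm_gradient_slice_le_iSup (hΩ : IsOpen Ω) (hΩb : Bornology.IsBounded Ω)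
    (hw : ContDiffOn ℝ 1 (fun q : E × ℝ => w q.1 q.2) (closure Ω ×ˢ Icc 0 T)) {x : E}
    (hx : x ∈ Ω) {t : ℝ} (ht : t ∈ Ioo 0 T) :
    ‖gradient (fun z => w z t) x‖ ≤ ⨆ z : Ω, ‖gradient (fun z => w z t) (z : E)‖ := by
  obtain ⟨C, hC⟩ := exists_norm_gradient_slice_le hΩ hΩb hw
  exact le_ciSup (f := fun z : Ω => ‖gradient (fun z => w z t) (z : E)‖)
    ⟨C, forall_mem_range.2 fun z => hC z z.2 t ht⟩ ⟨x, hx⟩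

-- Measurability comes from lower semicontinuity of the supremum.
theorem integrableOn_sq_iSup_norm_gradient_slice (hΩ : IsOpen Ω) (hΩb : Bornology.IsBounded Ω)
    (hw : ContDiffOn ℝ 1 (fun q : E × ℝ => w q.1 q.2) (closure Ω ×ˢ Icc 0 T)) :
    IntegrableOn (fun t => (⨆ z : Ω, ‖gradient (fun z => w z t) (z : E)‖) ^ 2) (Ioo 0 T) := by
  obtain ⟨C, hC⟩ := exists_norm_gradient_slice_le hΩ hΩb hw
  have hcont : ∀ z : Ω, Continuous fun t : Ioo 0 T => ‖gradient (fun z => w z t) (z : E)‖ := by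
    intro z
    simp only [norm_gradient]
    exact continuousOn_iff_continuous_domRestrict.1 (continuousOn_fderiv_comp_prodMk_left hΩ
      (hw.mono (prod_mono subset_closure Ioo_subset_Icc_self)) z.2).norm
  have hmeas : Measurable fun t : Ioo 0 T => ⨆ z : Ω, ‖gradient (fun z => w z t) (z : E)‖ :=
    (lowerSemicontinuous_ciSup
      (f := fun (z : Ω) (t : Ioo 0 T) => ‖gradient (fun y => w y t) (z : E)‖)
      (fun t => ⟨C, forall_mem_range.2 fun z => hC z z.2 t t.2⟩)
      fun z => (hcont z).lowerSemicontinuous).measurable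
  have hbound : ∀ t ∈ Ioo 0 T, (⨆ z : Ω, ‖gradient (fun z => w z t) (z : E)‖) ≤ max C 0 :=
    fun t ht => Real.iSup_le (fun z => (hC z z.2 t ht).trans (le_max_left _ _)) (le_max_right _ _)
  refine IntegrableOn.of_bound measure_Ioo_lt_top
    ((aemeasurable_restrict_of_measurable_subtype measurableSet_Ioo hmeas).pow_const
      2).aestronglyMeasurable (max C 0 ^ 2) ?_
  filter_upwards [ae_restrict_mem measurableSet_Ioo] with t ht
  rw [Real.norm_of_nonneg (sq_nonneg _)]
  exact pow_le_pow_left₀ (Real.iSup_nonneg fun _ => norm_nonneg _) (hbound t ht) 2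

end SpatialGradient

section Solutions

variable {E : Type*} [NormedAddCommGroup E] [InnerProductSpace ℝ E] [CompleteSpace E]

/-- `u` is a `C¹` solution, with `C¹` time derivative, of `∂ₜu + ⟨H, ∇u⟩ + p u = 0` in
`Ω × (0, T)` with initial value `a`. -/
structure IsTransportSolution (T : ℝ) (Ω : Set E) (p a : E → ℝ) (H : E → E) (u : E → ℝ → ℝ) :
    Prop where
  contDiffOn : ContDiffOn ℝ 1 (fun q : E × ℝ => u q.1 q.2) (closure Ω ×ˢ Icc 0 T)
  contDiffOn_deriv : ContDiffOn ℝ 1 (fun q : E × ℝ => deriv (u q.1) q.2) (closure Ω ×ˢ Icc 0 T)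
  eq : ∀ x ∈ Ω, ∀ t ∈ Ioo 0 T,
    deriv (u x) t + ⟪H x, gradient (fun z => u z t) x⟫ + p x * u x t = 0
  initial_eq : ∀ x ∈ Ω, u x 0 = a x

namespace IsTransportSolution

variable {T : ℝ} {Ω : Set E} {p a : E → ℝ} {H H₁ H₂ : E → E} {u u₁ u₂ : E → ℝ → ℝ} {x : E} {t : ℝ}

theorem eq_fderiv (h : IsTransportSolution T Ω p a H u) (hx : x ∈ Ω) (ht : t ∈ Ioo 0 T) :
    deriv (u x) t + fderiv ℝ (fun z => u z t) x (H x) + p x * u x t = 0 := by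
  simpa only [inner_gradient_right, conj_trivial] using h.eq x hx t ht

theorem fderiv_deriv_apply (h : IsTransportSolution T Ω p a H u) (hΩ : IsOpen Ω) (hx : x ∈ Ω)
    (ht : t ∈ Ioo 0 T) :
    fderiv ℝ (fun q : E × ℝ => deriv (u q.1) q.2) (x, t) (H x, 1) = -(p x * deriv (u x) t) := by
  refine eq_neg_of_add_eq_zero_left (transport_eq_time_deriv ?_
    ((h.contDiffOn_deriv.contDiffAt (closure_prod_Icc_mem_nhds hΩ hx ht)).hasStrictFDerivAt
      one_ne_zero) ?_)
  · filter_upwards [(hΩ.prod isOpen_Ioo).mem_nhds (mk_mem_prod hx ht)] with q hq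
    exact (h.contDiffOn.contDiffAt (closure_prod_Icc_mem_nhds hΩ hq.1 hq.2)).differentiableAt
      one_ne_zero
  · filter_upwards [isOpen_Ioo.mem_nhds ht] with τ hτ using h.eq_fderiv hx hτ

theorem deriv_zero (h : IsTransportSolution T Ω p a H u) (hΩ : IsOpen Ω) (hT : 0 < T)
    (hx : x ∈ Ω) : deriv (u x) 0 + fderiv ℝ a x (H x) + p x * a x = 0 := by
  have hinitial : (fun z => u z 0) =ᶠ[𝓝 x] a :=
    Filter.eventuallyEq_of_mem (hΩ.mem_nhds hx) h.initial_eq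
  have hclosure : Ω ×ˢ Icc 0 T ⊆ closure Ω ×ˢ Icc 0 T := prod_mono subset_closure subset_rfl
  rw [← hinitial.fderiv_eq, ← h.initial_eq x hx]
  exact transport_eq_initial hΩ hT (h.contDiffOn.mono hclosure)
    (h.contDiffOn_deriv.continuousOn.mono hclosure) hx fun _ ht => h.eq_fderiv hx ht

theorem deriv_zero_sub (h₁ : IsTransportSolution T Ω p a H₁ u₁)
    (h₂ : IsTransportSolution T Ω p a H₂ u₂) (hΩ : IsOpen Ω) (hT : 0 < T) (hx : x ∈ Ω) :
    deriv (u₁ x) 0 - deriv (u₂ x) 0 = -fderiv ℝ a x (H₁ x - H₂ x) := by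
  rw [map_sub]
  linarith [h₁.deriv_zero hΩ hT hx, h₂.deriv_zero hΩ hT hx]

theorem fderiv_deriv_sub_apply (h₁ : IsTransportSolution T Ω p a H₁ u₁)
    (h₂ : IsTransportSolution T Ω p a H₂ u₂) (hΩ : IsOpen Ω) (hx : x ∈ Ω) (ht : t ∈ Ioo 0 T) :
    fderiv ℝ (fun q : E × ℝ => deriv (u₁ q.1) q.2 - deriv (u₂ q.1) q.2) (x, t) (H₁ x, 1) =
      -(p x * (deriv (u₁ x) t - deriv (u₂ x) t)) -
        ⟪gradient (fun z => deriv (u₂ z) t) x, H₁ x - H₂ x⟫ := by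
  have hmem := closure_prod_Icc_mem_nhds (T := T) hΩ hx ht
  have hd₁ := (h₁.contDiffOn_deriv.contDiffAt hmem).differentiableAt one_ne_zero
  have hd₂ := (h₂.contDiffOn_deriv.contDiffAt hmem).differentiableAt one_ne_zero
  have hsplit : ((H₁ x, 1) : E × ℝ) = (H₂ x, 1) + (H₁ x - H₂ x, 0) := by simp
  have he₂ := h₂.fderiv_deriv_apply hΩ hx ht
  rw [inner_gradient_left, (hasFDerivAt_comp_prodMk_left hd₂.hasFDerivAt).fderiv,
    fderiv_fun_sub hd₁ hd₂, sub_apply, h₁.fderiv_deriv_apply hΩ hx ht, hsplit, map_add, he₂,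
    ContinuousLinearMap.comp_apply, ContinuousLinearMap.inl_apply]
  ring

theorem abs_fderiv_deriv_sub_apply_le [FiniteDimensional ℝ E]
    (h₁ : IsTransportSolution T Ω p a H₁ u₁) (h₂ : IsTransportSolution T Ω p a H₂ u₂)
    (hΩ : IsOpen Ω) (hΩb : Bornology.IsBounded Ω) {C : ℝ} (hp : |p x| ≤ C) (hx : x ∈ Ω)
    (ht : t ∈ Ioo 0 T) :
    |fderiv ℝ (fun q : E × ℝ => deriv (u₁ q.1) q.2 - deriv (u₂ q.1) q.2) (x, t) (H₁ x, 1)| ≤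
      C * |deriv (u₁ x) t - deriv (u₂ x) t| +
        ‖H₁ x - H₂ x‖ * ⨆ z : Ω, ‖gradient (fun z => deriv (u₂ z) t) (z : E)‖ := by
  rw [h₁.fderiv_deriv_sub_apply h₂ hΩ hx ht]
  refine (abs_sub _ _).trans (add_le_add ?_ ?_)
  · rw [abs_neg, abs_mul]
    exact mul_le_mul_of_nonneg_right hp (abs_nonneg _)
  · rw [mul_comm]
    exact (abs_real_inner_le_norm _ _).trans (mul_le_mul_of_nonneg_right
      (norm_gradient_slice_le_iSup hΩ hΩb h₂.contDiffOn_deriv hx ht) (norm_nonneg _))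

end IsTransportSolution

end Solutions

section Collar

variable {d : ℕ} {ρ₀ c : ℝ} {ℓ : Esp d → ℝ} {Ω : Set (Esp (d + 1))} {x : Esp d} {s : ℝ}

/-- `Ω` contains the layer of vertical thickness `c` below the graph of `ℓ` over the ball of
radius `ρ₀`. -/
def ContainsSubgraphCollar (ρ₀ c : ℝ) (ℓ : Esp d → ℝ) (Ω : Set (Esp (d + 1))) : Prop :=
  ∀ (x' : Esp d) (xn : ℝ), ‖x'‖ < ρ₀ → ℓ x' - c < xn → xn < ℓ x' → graphMk d x' xn ∈ Ω

namespace ContainsSubgraphCollar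

theorem graphFlat_mem (h : ContainsSubgraphCollar ρ₀ c ℓ Ω) (hx : ‖x‖ < ρ₀)
    (hs : s ∈ Ioo (-c) 0) : graphFlat ℓ (x, s) ∈ Ω :=
  h x _ hx (by linarith [hs.1]) (by linarith [hs.2])

theorem graphFlat_mem_closure (h : ContainsSubgraphCollar ρ₀ c ℓ Ω) (hx : ‖x‖ < ρ₀)
    (hs : s ∈ Ioc (-c) 0) : graphFlat ℓ (x, s) ∈ closure Ω := by
  have hvertical : Continuous fun r : ℝ => graphFlat ℓ (x, r) :=
    (graphEquiv d).continuous.comp (g := graphEquiv d)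
      (by fun_prop : Continuous fun r : ℝ => (x, ℓ x + r))
  refine mem_closure_of_tendsto
    ((hvertical.tendsto s).mono_left (nhdsWithin_le_nhds (s := Iio s))) ?_
  filter_upwards [Ioo_mem_nhdsLT hs.1] with r hr
  exact h.graphFlat_mem hx ⟨hr.1, hr.2.trans_le hs.2⟩

theorem zero_mem_closure (h : ContainsSubgraphCollar ρ₀ c ℓ Ω) (hρ₀ : 0 < ρ₀) (hc : 0 < c)
    (hℓ0 : ℓ 0 = 0) : (0 : Esp (d + 1)) ∈ closure Ω := by
  rw [← graphFlat_zero hℓ0]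
  exact h.graphFlat_mem_closure (by simpa using hρ₀) (right_mem_Ioc.2 (neg_lt_zero.2 hc))

theorem uniqueDiffWithinAt_closure (h : ContainsSubgraphCollar ρ₀ c ℓ Ω) (hρ₀ : 0 < ρ₀)
    (hc : 0 < c) (hℓ : DifferentiableAt ℝ ℓ 0) (hℓ0 : ℓ 0 = 0) :
    UniqueDiffWithinAt ℝ (closure Ω) 0 := by
  have hlayer : UniqueDiffWithinAt ℝ (ball (0 : Esp d) ρ₀ ×ˢ Ioo (-c) 0) 0 := by
    refine uniqueDiffWithinAt_convex ((convex_ball _ _).prod (convex_Ioo _ _)) ?_ ?_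
    · rw [(isOpen_ball.prod isOpen_Ioo).interior_eq]
      exact ⟨(0, -c / 2), mem_ball_self hρ₀, by constructor <;> linarith⟩
    · rw [closure_prod_eq, closure_Ioo (neg_lt_zero.2 hc).ne]
      exact ⟨subset_closure (mem_ball_self hρ₀), right_mem_Icc.2 (neg_lt_zero.2 hc).le⟩
  have himage := (hasFDerivAt_graphFlat (y := 0) hℓ).hasFDerivWithinAt.uniqueDiffWithinAt hlayer
    (Function.Surjective.denseRange fun z =>
      ⟨(((graphEquiv d).symm z).1,
        ((graphEquiv d).symm z).2 - fderiv ℝ ℓ 0 ((graphEquiv d).symm z).1), by simp⟩)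
  rw [graphFlat_zero hℓ0] at himage
  refine himage.mono ?_
  rintro _ ⟨⟨x, s⟩, ⟨hx, hs⟩, rfl⟩
  exact subset_closure (h.graphFlat_mem (mem_ball_zero_iff.1 hx) hs)

end ContainsSubgraphCollar

end Collar

section Coercivity

variable {E F : Type*} [NormedAddCommGroup E] [NormedSpace ℝ E] [NormedAddCommGroup F]
  [NormedSpace ℝ F]

theorem tendsto_fderiv_nhdsWithin {Ω : Set E} (hΩ : IsOpen Ω) {x₀ : E} (hx₀ : x₀ ∈ closure Ω)
    (hunique : UniqueDiffWithinAt ℝ (closure Ω) x₀) {f : E → F}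
    (hf : ContDiffOn ℝ 1 f (closure Ω)) (hfd : DifferentiableAt ℝ f x₀) :
    Filter.Tendsto (fderiv ℝ f) (𝓝[Ω] x₀) (𝓝 (fderiv ℝ f x₀)) := by
  obtain ⟨V, hVo, hV, f', hf', hf'_cont⟩ :=
    exists_continuousOn_hasFDerivWithinAt_of_contDiffOn_one hf hx₀
  have hlimit : f' x₀ = fderiv ℝ f x₀ :=
    hunique.eq (hf' x₀ ⟨hV, hx₀⟩) hfd.hasFDerivAt.hasFDerivWithinAt
  have hmem : ∀ᶠ x in 𝓝[Ω] x₀, x ∈ V ∩ Ω :=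
    Filter.inter_mem (nhdsWithin_le_nhds (hVo.mem_nhds hV)) self_mem_nhdsWithin
  have hclosure : 𝓝[Ω] x₀ ≤ 𝓝[V ∩ closure Ω] x₀ := nhdsWithin_le_iff.2 <|
    Filter.mem_of_superset hmem (inter_subset_inter_right V subset_closure)
  rw [← hlimit]
  refine ((hf'_cont x₀ ⟨hV, hx₀⟩).tendsto.mono_left hclosure).congr' ?_
  filter_upwards [hmem] with x hx
  exact ((hf' x ⟨hx.1, subset_closure hx.2⟩).hasFDerivAt
    (Filter.mem_of_superset (hΩ.mem_nhds hx.2) subset_closure)).fderiv.symm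

theorem exists_eventually_mul_norm_le_of_injective [FiniteDimensional ℝ E] {α : Type*}
    {l : Filter α} {L : α → E →L[ℝ] F} {L₀ : E →L[ℝ] F} (hL : Filter.Tendsto L l (𝓝 L₀))
    (hinj : Function.Injective L₀) : ∃ c > 0, ∀ᶠ x in l, ∀ v, c * ‖v‖ ≤ ‖L x v‖ := by
  obtain ⟨K, hK, hKL⟩ := (LinearMap.injective_iff_antilipschitz L₀.toLinearMap).1 hinj
  have hK' : (0 : ℝ) < K := hK
  refine ⟨(2 * (K : ℝ))⁻¹, by positivity, ?_⟩
  filter_upwards [Metric.tendsto_nhds.1 hL (2 * (K : ℝ))⁻¹ (by positivity)] with x hx v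
  have hlower : ‖v‖ ≤ K * ‖L₀ v‖ := by simpa using hKL.le_mul_dist v 0
  have hclose : ‖(L x - L₀) v‖ ≤ (2 * (K : ℝ))⁻¹ * ‖v‖ :=
    (L x - L₀).le_of_opNorm_le (dist_eq_norm (L x) L₀ ▸ hx.le) v
  have hsplit : ‖L₀ v‖ ≤ ‖L x v‖ + ‖(L x - L₀) v‖ := by
    simpa using norm_sub_le (L x v) ((L x - L₀) v)
  rw [inv_mul_le_iff₀ (by positivity)]
  have hhalf : K * ((2 * (K : ℝ))⁻¹ * ‖v‖) = ‖v‖ / 2 := by field_simp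
  linarith [mul_le_mul_of_nonneg_left (hsplit.trans (add_le_add_right hclose _)) hK'.le]

theorem exists_eventually_mul_norm_sq_le_sum_sq [FiniteDimensional ℝ E] {ι α : Type*} [Fintype ι]
    {l : Filter α} {L : ι → α → E →L[ℝ] ℝ} {L₀ : ι → E →L[ℝ] ℝ}
    (hL : ∀ k, Filter.Tendsto (L k) l (𝓝 (L₀ k))) (hinj : ∀ v, (∀ k, L₀ k v = 0) → v = 0) :
    ∃ c > 0, ∀ᶠ x in l, ∀ v, c * ‖v‖ ^ 2 ≤ ∑ k, (L k x v) ^ 2 := by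
  let toEuclidean : (ι → E →L[ℝ] ℝ) → E →L[ℝ] EuclideanSpace ℝ ι := fun f =>
    ((EuclideanSpace.equiv ι ℝ).symm : (ι → ℝ) →L[ℝ] EuclideanSpace ℝ ι).comp
      (ContinuousLinearMap.pi f)
  have hcont : Continuous toEuclidean :=
    continuous_clm_apply.2 fun v => (EuclideanSpace.equiv ι ℝ).symm.continuous.comp
      (by fun_prop : Continuous fun (f : ι → E →L[ℝ] ℝ) k => f k v)
  have hinjective : Function.Injective (toEuclidean L₀) := by
    refine (injective_iff_map_eq_zero _).2 fun v hv => hinj v fun k => ?_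
    exact congrArg (fun w : EuclideanSpace ℝ ι => w k) hv
  obtain ⟨c, hc, hev⟩ := exists_eventually_mul_norm_le_of_injective
    ((hcont.tendsto L₀).comp (tendsto_pi_nhds.2 fun k => hL k)) hinjective
  refine ⟨c ^ 2, by positivity, hev.mono fun x hx v => ?_⟩
  rw [← mul_pow]
  refine (pow_le_pow_left₀ (by positivity) (hx v) 2).trans_eq ?_
  exact EuclideanSpace.real_norm_sq_eq _

theorem eq_zero_of_det_gradient_ne_zero {n : ℕ} {a : Fin n → Esp n → ℝ} {x₀ : Esp n}
    (hdet : (Matrix.of fun (i k : Fin n) => gradient (a k) x₀ i).det ≠ 0) {v : Esp n}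
    (hv : ∀ k, fderiv ℝ (a k) x₀ v = 0) : v = 0 := by
  have hvecMul : Matrix.vecMul (fun i => v i)
      (Matrix.of fun (i k : Fin n) => gradient (a k) x₀ i) = 0 := by
    funext k
    have hinner := hv k
    rw [← inner_gradient_left, PiLp.inner_apply] at hinner
    simpa [Matrix.vecMul, dotProduct] using hinner
  ext i
  exact congrFun (Matrix.eq_zero_of_vecMul_eq_zero hdet hvecMul) i

theorem differentiableAt_of_det_gradient_ne_zero {n : ℕ} {a : Fin n → Esp n → ℝ} {x₀ : Esp n}
    (hdet : (Matrix.of fun (i k : Fin n) => gradient (a k) x₀ i).det ≠ 0) (k : Fin n) :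
    DifferentiableAt ℝ (a k) x₀ := by
  by_contra hnd
  refine hdet (Matrix.det_eq_zero_of_column_eq_zero k fun i => ?_)
  simp [gradient, fderiv_zero_of_not_differentiableAt hnd]

theorem exists_eventually_mul_norm_sq_le_sum_sq_fderiv {n : ℕ} {Ω : Set (Esp n)} (hΩ : IsOpen Ω)
    {x₀ : Esp n} (hx₀ : x₀ ∈ closure Ω) (hunique : UniqueDiffWithinAt ℝ (closure Ω) x₀)
    {a : Fin n → Esp n → ℝ} (ha : ∀ k, ContDiffOn ℝ 1 (a k) (closure Ω))
    (hdet : (Matrix.of fun (i k : Fin n) => gradient (a k) x₀ i).det ≠ 0) :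
    ∃ c > 0, ∀ᶠ x in 𝓝[Ω] x₀, ∀ v : Esp n, c * ‖v‖ ^ 2 ≤ ∑ k, (fderiv ℝ (a k) x v) ^ 2 :=
  exists_eventually_mul_norm_sq_le_sum_sq
    (fun k => tendsto_fderiv_nhdsWithin hΩ hx₀ hunique (ha k)
      (differentiableAt_of_det_gradient_ne_zero hdet k))
    fun _ hv => eq_zero_of_det_gradient_ne_zero hdet hv

end Coercivity

section GraphDomain

variable {d : ℕ} {ρ : ℝ} {ℓ h : Esp d → ℝ}

/-- The layer `{(x, s) : |x| < ρ, -h(x) < s < 0}`, which is a graph domain seen in the flattening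
coordinates. -/
def flatDomain (ρ : ℝ) (h : Esp d → ℝ) : Set (Esp d × ℝ) :=
  {y | ‖y.1‖ < ρ ∧ -h y.1 < y.2 ∧ y.2 < 0}

theorem measurableSet_flatDomain (hh : Continuous h) : MeasurableSet (flatDomain ρ h) := by
  refine IsOpen.measurableSet ?_
  exact (isOpen_lt continuous_fst.norm continuous_const).inter
    ((isOpen_lt (hh.comp continuous_fst).neg continuous_snd).inter
      (isOpen_lt continuous_snd continuous_const))

theorem graphDomain_eq_image (ρ : ℝ) (ℓ h : Esp d → ℝ) :
    graphDomain d ρ ℓ h = graphFlat ℓ '' flatDomain ρ h := by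
  ext z
  constructor
  · rintro ⟨x, r, hx, hlower, hupper, rfl⟩
    exact ⟨(x, r - ℓ x), ⟨hx, by dsimp only; linarith, by dsimp only; linarith⟩,
      by simp [graphFlat]⟩
  · rintro ⟨⟨x, s⟩, ⟨hx, hlower, hupper⟩, rfl⟩
    exact ⟨x, ℓ x + s, hx, by linarith, by linarith, rfl⟩

theorem setIntegral_graphDomain (hℓ : ContinuousOn ℓ (ball 0 ρ)) (hh : Continuous h)
    (f : Esp (d + 1) → ℝ) :
    ∫ x in graphDomain d ρ ℓ h, f x = ∫ y in flatDomain ρ h, f (graphFlat ℓ y) := by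
  classical
  have hmeas : Measurable ((ball (0 : Esp d) ρ).piecewise ℓ 0) :=
    hℓ.measurable_piecewise continuousOn_const measurableSet_ball
  have heq : EqOn (graphFlat ((ball (0 : Esp d) ρ).piecewise ℓ 0)) (graphFlat ℓ)
      (flatDomain ρ h) := fun y hy => by
    rw [graphFlat, graphFlat, piecewise_eq_of_mem _ _ _ (mem_ball_zero_iff.2 hy.1)]
  rw [graphDomain_eq_image, ← heq.image_eq,
    (measurePreserving_graphFlat hmeas).setIntegral_image_emb (measurableEmbedding_graphFlat hmeas)]
  exact setIntegral_congr_fun (measurableSet_flatDomain hh) fun y hy => congrArg f (heq hy)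

theorem mul_setIntegral_graphDomain_le {η κ : ℝ} (hκ : 0 < κ) (hℓ : ContinuousOn ℓ (ball 0 ρ))
    (hh : Continuous h) (hhη : ∀ x, ‖x‖ < ρ → h x ≤ η) {f : Esp (d + 1) → ℝ} (hf : ∀ x, 0 ≤ f x)
    {W : Esp d × ℝ → ℝ} (hW₀ : ∀ y, 0 ≤ W y) (hW : ∀ y ∈ flatDomain ρ h, κ ≤ W y)
    (hfW : Integrable (fun y => f (graphFlat ℓ y) * W y) (layerMeasure (Esp d) η)) :
    κ * ∫ x in graphDomain d ρ ℓ h, f x ≤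
      ∫ y, f (graphFlat ℓ y) * W y ∂layerMeasure (Esp d) η := by
  have hsubset : flatDomain ρ h ⊆ univ ×ˢ Ioo (-η) 0 := fun y hy =>
    ⟨mem_univ _, (neg_le_neg (hhη y.1 hy.1)).trans_lt hy.2.1, hy.2.2⟩
  rw [layerMeasure_eq_restrict] at hfW ⊢
  rw [setIntegral_graphDomain hℓ hh, ← integral_const_mul]
  refine (integral_mono_of_nonneg (.of_forall fun y => mul_nonneg hκ.le (hf _))
    (hfW.mono_measure (Measure.restrict_mono_set volume hsubset)) ?_).trans
    (setIntegral_mono_set hfW (.of_forall fun y => mul_nonneg (hf _) (hW₀ y)) hsubset.eventuallyLE)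
  filter_upwards [ae_restrict_mem (measurableSet_flatDomain hh)] with y hy
  rw [mul_comm]
  exact mul_le_mul_of_nonneg_left (hW y hy) (hf _)

end GraphDomain

theorem integral_integral_le_of_le_indicator {α β : Type*} [MeasurableSpace α] [MeasurableSpace β]
    {μ : Measure α} {ν : Measure β} [SFinite μ] [SFinite ν] {s : Set β} (hs : MeasurableSet s)
    {f g : α → β → ℝ} (hf : Integrable (fun q : α × β => f q.1 q.2) (μ.prod (ν.restrict s)))
    (hg₀ : ∀ᵐ t ∂μ, ∀ x, 0 ≤ g t x) (hgf : ∀ᵐ t ∂μ, ∀ x, g t x ≤ s.indicator (f t) x) :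
    ∫ t, ∫ x, g t x ∂ν ∂μ ≤ ∫ t, ∫ x in s, f t x ∂ν ∂μ := by
  refine integral_mono_of_nonneg (hg₀.mono fun t ht => integral_nonneg ht) hf.integral_prod_left ?_
  filter_upwards [hg₀, hgf, hf.prod_right_ae] with t ht₀ ht hft
  rw [← integral_indicator hs]
  exact integral_mono_of_nonneg (.of_forall ht₀) ((integrable_indicator_iff hs).2 hft)
    (.of_forall ht)

section AdaptedLayer

variable {d : ℕ} {T M δ ρ₀ c ρ η : ℝ} {ℓ : Esp d → ℝ} {Ω : Set (Esp (d + 1))}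
  {H : Esp (d + 1) → Esp (d + 1)} {y : Esp d × ℝ}

/-- The layer of thickness `η` over the ball of radius `ρ`, in the coordinates `graphFlat ℓ`, is so
small that it stays in the collar of `Ω`, that `slabPhase η T` is negative near its lateral
boundary, and that this phase increases at speed at least `δ / 4` along every field bounded by `M`
in `C¹` whose normal component at the origin is at least `δ`. -/
structure IsAdaptedLayer (T M δ ρ₀ c : ℝ) (ℓ : Esp d → ℝ) (ρ η : ℝ) : Prop where
  radius_lt : ρ < ρ₀
  depth_pos : 0 < η
  depth_lt : η < c
  sqrt_depth_lt : √η < ρ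
  depth_div_le : η / T ≤ δ / 4
  phaseSpeedLoss_le : ∀ y ∈ layerCylinder (Esp d) ρ η, phaseSpeedLoss M ℓ y ≤ δ / 2

theorem exists_isAdaptedLayer (M : ℝ) (hT : 0 < T) (hδ : 0 < δ) (hρ₀ : 0 < ρ₀) (hc : 0 < c)
    (hℓ : ContDiffAt ℝ 1 ℓ 0) (hℓ0 : ℓ 0 = 0) {P : Esp (d + 1) → Prop} (hP : ∀ᶠ x in 𝓝[Ω] 0, P x) :
    ∃ ρ η, IsAdaptedLayer T M δ ρ₀ c ℓ ρ η ∧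
      ∀ y ∈ layerCylinder (Esp d) ρ η, graphFlat ℓ y ∈ Ω → P (graphFlat ℓ y) := by
  have hflat : Filter.Tendsto (graphFlat ℓ) (𝓝 0) (𝓝 0) := by
    have hcont : ContinuousAt (graphFlat ℓ) 0 :=
      (hasFDerivAt_graphFlat (y := 0) (hℓ.differentiableAt one_ne_zero)).continuousAt
    simpa only [ContinuousAt, graphFlat_zero hℓ0] using hcont
  obtain ⟨ρ, hρ, η, hη, hηρ, hlayer⟩ := exists_layerCylinder_forall
    ((eventually_phaseSpeedLoss_le M (half_pos hδ) hℓ hℓ0).and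
      (hflat.eventually (eventually_nhdsWithin_iff.1 hP))) hρ₀
    (lt_min hc (mul_pos (div_pos hδ four_pos) hT))
  rw [mem_Ioo, lt_min_iff] at hη
  exact ⟨ρ, η, ⟨hρ.2, hη.1, hη.2.1, hηρ, (div_le_iff₀ hT).2 hη.2.2.le, fun y hy => (hlayer y hy).1⟩,
    fun y hy => (hlayer y hy).2⟩

namespace IsAdaptedLayer

theorem radius_pos (h : IsAdaptedLayer T M δ ρ₀ c ℓ ρ η) : 0 < ρ :=
  (Real.sqrt_nonneg η).trans_lt h.sqrt_depth_lt

theorem norm_fst_lt (h : IsAdaptedLayer T M δ ρ₀ c ℓ ρ η) (hy : y ∈ layerCylinder (Esp d) ρ η) :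
    ‖y.1‖ < ρ₀ :=
  (mem_closedBall_zero_iff.1 hy.1).trans_lt h.radius_lt

theorem graphFlat_mem (h : IsAdaptedLayer T M δ ρ₀ c ℓ ρ η)
    (hΩ : ContainsSubgraphCollar ρ₀ c ℓ Ω) (hy : ‖y.1‖ < ρ) (hy' : y.2 ∈ Ioo (-η) 0) :
    graphFlat ℓ y ∈ Ω :=
  hΩ.graphFlat_mem (hy.trans h.radius_lt) ⟨(neg_lt_neg h.depth_lt).trans hy'.1, hy'.2⟩

theorem mapsTo_closure (h : IsAdaptedLayer T M δ ρ₀ c ℓ ρ η)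
    (hΩ : ContainsSubgraphCollar ρ₀ c ℓ Ω) :
    MapsTo (graphFlat ℓ) (layerCylinder (Esp d) ρ η) (closure Ω) := fun _ hy =>
  hΩ.graphFlat_mem_closure (h.norm_fst_lt hy) ⟨(neg_lt_neg h.depth_lt).trans_le hy.2.1, hy.2.2⟩

theorem image_fst_subset (h : IsAdaptedLayer T M δ ρ₀ c ℓ ρ η) :
    Prod.fst '' layerCylinder (Esp d) ρ η ⊆ ball 0 ρ₀ :=
  image_subset_iff.2 fun _ hy => mem_ball_zero_iff.2 (h.norm_fst_lt hy)

theorem zero_mem_closure (h : IsAdaptedLayer T M δ ρ₀ c ℓ ρ η)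
    (hΩ : ContainsSubgraphCollar ρ₀ c ℓ Ω) (hℓ0 : ℓ 0 = 0) : (0 : Esp (d + 1)) ∈ closure Ω :=
  hΩ.zero_mem_closure (h.radius_pos.trans h.radius_lt) (h.depth_pos.trans h.depth_lt) hℓ0

variable (h : IsAdaptedLayer T M δ ρ₀ c ℓ ρ η) (hΩ : ContainsSubgraphCollar ρ₀ c ℓ Ω)
  (hℓ0 : ℓ 0 = 0) (hδ : 0 ≤ δ) (hH : IsC1BoundedNear M (closure Ω) H)
  (hH0 : δ < ⟪H 0, nuUp d ℓ 0⟫) (hy : y ∈ layerCylinder (Esp d) ρ η)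
include h hΩ hℓ0 hδ hH hH0 hy

theorem driftVer_nonneg : 0 ≤ driftVer ℓ H y := by
  have hM : 0 ≤ M := (norm_nonneg _).trans (hH.norm_le (h.mapsTo_closure hΩ hy))
  have hhor : 0 ≤ ‖y.1‖ * M := mul_nonneg (norm_nonneg _) hM
  linarith [sub_phaseSpeedLoss_add_le_driftVer hH (h.zero_mem_closure hΩ hℓ0)
    (h.mapsTo_closure hΩ hy), le_inner_graphNormal_of_lt_inner_nuUp hδ hH0,
    h.phaseSpeedLoss_le y hy]

theorem le_phase_speed : δ / 4 ≤ driftVer ℓ H y - 2 * ⟪y.1, driftHor ℓ H y⟫ - η / T := by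
  linarith [sub_phaseSpeedLoss_le hH (h.zero_mem_closure hΩ hℓ0) (h.mapsTo_closure hΩ hy),
    le_inner_graphNormal_of_lt_inner_nuUp hδ hH0, h.phaseSpeedLoss_le y hy, h.depth_div_le]

end IsAdaptedLayer

end AdaptedLayer

section Misfit

variable {d : ℕ}

/-- The difference `∂ₜu₁ - ∂ₜu₂` in the coordinates `graphFlat ℓ`. -/
def flatMisfit (ℓ : Esp d → ℝ) (u₁ u₂ : Esp (d + 1) → ℝ → ℝ) (z : (Esp d × ℝ) × ℝ) : ℝ :=
  deriv (u₁ (graphFlat ℓ z.1)) z.2 - deriv (u₂ (graphFlat ℓ z.1)) z.2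

/-- The distance of the vector fields `H₁` and `H₂` in the coordinates `graphFlat ℓ`. -/
def flatDriftGap (ℓ : Esp d → ℝ) (H₁ H₂ : Esp (d + 1) → Esp (d + 1)) (y : Esp d × ℝ) : ℝ :=
  ‖H₁ (graphFlat ℓ y) - H₂ (graphFlat ℓ y)‖

/-- The squared `L²` norm of `∂ₜu₁ - ∂ₜu₂` on `Γ × (0, T)`, where `Γ` is the graph of `ℓ` over the
ball of radius `ρ₀`. -/
def boundaryMisfit (T ρ₀ : ℝ) (ℓ : Esp d → ℝ) (u₁ u₂ : Esp (d + 1) → ℝ → ℝ) : ℝ :=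
  ∫ t in Ioo 0 T, ∫ x' in ball (0 : Esp d) ρ₀,
    (deriv (u₁ (graphMk d x' (ℓ x'))) t - deriv (u₂ (graphMk d x' (ℓ x'))) t) ^ 2 * omegaW d ℓ x'

variable {T M δ ρ₀ c ρ η C₀ : ℝ} {ℓ : Esp d → ℝ} {Ω : Set (Esp (d + 1))} {p a : Esp (d + 1) → ℝ}
  {H H₁ H₂ : Esp (d + 1) → Esp (d + 1)} {u₁ u₂ : Esp (d + 1) → ℝ → ℝ}

theorem flatMisfit_zero_right (ℓ : Esp d → ℝ) (u₁ u₂ : Esp (d + 1) → ℝ → ℝ) (x : Esp d) (t : ℝ) :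
    flatMisfit ℓ u₁ u₂ ((x, 0), t) =
      deriv (u₁ (graphMk d x (ℓ x))) t - deriv (u₂ (graphMk d x (ℓ x))) t := by
  rw [flatMisfit, graphFlat, add_zero]

theorem contDiffOn_flatMisfit {S : Set (Esp d × ℝ)}
    (h₁ : IsTransportSolution T Ω p a H₁ u₁) (h₂ : IsTransportSolution T Ω p a H₂ u₂)
    (hℓ : ContDiffOn ℝ 1 ℓ (Prod.fst '' S)) (hS : MapsTo (graphFlat ℓ) S (closure Ω)) :
    ContDiffOn ℝ 1 (flatMisfit ℓ u₁ u₂) (S ×ˢ Icc 0 T) :=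
  (h₁.contDiffOn_deriv.sub h₂.contDiffOn_deriv).comp
    (((contDiffOn_graphFlat hℓ).comp contDiff_fst.contDiffOn fun _ hz => hz.1).prodMk
      contDiff_snd.contDiffOn) fun _ hz => ⟨hS hz.1, hz.2⟩

theorem abs_fderiv_flatMisfit_le (h₁ : IsTransportSolution T Ω p a H₁ u₁)
    (h₂ : IsTransportSolution T Ω p a H₂ u₂) (hΩ : IsOpen Ω) (hΩb : Bornology.IsBounded Ω)
    (hp : ∀ x ∈ Ω, |p x| ≤ C₀) {y : Esp d × ℝ} {t : ℝ} (hℓ : DifferentiableAt ℝ ℓ y.1)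
    (hy : graphFlat ℓ y ∈ Ω) (ht : t ∈ Ioo 0 T) :
    |fderiv ℝ (flatMisfit ℓ u₁ u₂) (y, t) ((driftHor ℓ H₁ y, driftVer ℓ H₁ y), 1)| ≤
      C₀ * |flatMisfit ℓ u₁ u₂ (y, t)| + flatDriftGap ℓ H₁ H₂ y *
        ⨆ z : Ω, ‖gradient (fun z => deriv (u₂ z) t) (z : Esp (d + 1))‖ := by
  have hmisfit : DifferentiableAt ℝ
      (fun q : Esp (d + 1) × ℝ => deriv (u₁ q.1) q.2 - deriv (u₂ q.1) q.2) (graphFlat ℓ y, t) :=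
    ((h₁.contDiffOn_deriv.sub h₂.contDiffOn_deriv).contDiffAt
      (closure_prod_Icc_mem_nhds hΩ hy ht)).differentiableAt one_ne_zero
  have hflat : HasFDerivAt (graphFlat ℓ) (fderiv ℝ (graphFlat ℓ) y) y :=
    (hasFDerivAt_graphFlat hℓ).differentiableAt.hasFDerivAt
  have hpair : HasFDerivAt (fun z : (Esp d × ℝ) × ℝ => (graphFlat ℓ z.1, z.2)) _ (y, t) :=
    (HasFDerivAt.comp (y, t) (f := Prod.fst) hflat hasFDerivAt_fst).prodMk
      (hasFDerivAt_snd (𝕜 := ℝ))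
  have hchain : HasFDerivAt (flatMisfit ℓ u₁ u₂) _ (y, t) :=
    HasFDerivAt.comp (y, t) (g := fun q : Esp (d + 1) × ℝ => deriv (u₁ q.1) q.2 -
      deriv (u₂ q.1) q.2) hmisfit.hasFDerivAt hpair
  have htransport : fderiv ℝ (flatMisfit ℓ u₁ u₂) (y, t)
      ((driftHor ℓ H₁ y, driftVer ℓ H₁ y), 1) =
      fderiv ℝ (fun q : Esp (d + 1) × ℝ => deriv (u₁ q.1) q.2 - deriv (u₂ q.1) q.2)
        (graphFlat ℓ y, t) (H₁ (graphFlat ℓ y), 1) := by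
    rw [hchain.fderiv, ← fderiv_graphFlat_drift (H := H₁) hℓ]
    rfl
  rw [htransport]
  exact h₁.abs_fderiv_deriv_sub_apply_le h₂ hΩ hΩb (hp _ hy) hy ht

theorem continuousOn_flatDriftGap (h : IsAdaptedLayer T M δ ρ₀ c ℓ ρ η)
    (hΩ : ContainsSubgraphCollar ρ₀ c ℓ Ω) (hℓ : ContinuousOn ℓ (ball 0 ρ₀))
    (hH₁ : ContinuousOn H₁ (closure Ω)) (hH₂ : ContinuousOn H₂ (closure Ω)) :
    ContinuousOn (flatDriftGap ℓ H₁ H₂) (layerCylinder (Esp d) ρ η) := by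
  have hflat : ContinuousOn (graphFlat ℓ) (layerCylinder (Esp d) ρ η) :=
    (contDiffOn_graphFlat
      (contDiffOn_zero.2 (hℓ.mono h.image_fst_subset))).continuousOn
  exact ((hH₁.comp hflat (h.mapsTo_closure hΩ)).sub (hH₂.comp hflat (h.mapsTo_closure hΩ))).norm

theorem isSlabTransportInequality_flatMisfit (h : IsAdaptedLayer T M δ ρ₀ c ℓ ρ η) (hδ : 0 ≤ δ)
    (hΩ : IsOpen Ω) (hΩb : Bornology.IsBounded Ω) (hcollar : ContainsSubgraphCollar ρ₀ c ℓ Ω)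
    (hℓ : ContDiffOn ℝ 2 ℓ (ball 0 ρ₀)) (hℓ0 : ℓ 0 = 0) (hp : ∀ x ∈ Ω, |p x| ≤ C₀)
    (hH₁ : IsC1BoundedNear M (closure Ω) H₁) (hH0 : δ < ⟪H₁ 0, nuUp d ℓ 0⟫)
    (hH₂ : ContinuousOn H₂ (closure Ω)) (h₁ : IsTransportSolution T Ω p a H₁ u₁)
    (h₂ : IsTransportSolution T Ω p a H₂ u₂) :
    IsSlabTransportInequality (EuclideanSpace.basisFun (Fin d) ℝ) η T ρ (δ / 4) C₀ ((d + 1) * M)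
      (flatMisfit ℓ u₁ u₂) (driftHor ℓ H₁) (driftVer ℓ H₁) (flatDriftGap ℓ H₁ H₂)
      fun t => ⨆ z : Ω, ‖gradient (fun z => deriv (u₂ z) t) (z : Esp (d + 1))‖ := by
  have hmaps := h.mapsTo_closure hcollar
  have hℓ₁ : ContDiffOn ℝ 1 ℓ (Prod.fst '' layerCylinder (Esp d) ρ η) :=
    (hℓ.of_le one_le_two).mono h.image_fst_subset
  have hℓat : ∀ {x : Esp d}, ‖x‖ < ρ → ContDiffAt ℝ 2 ℓ x := fun hx =>
    hℓ.contDiffAt (isOpen_ball.mem_nhds (mem_ball_zero_iff.2 (hx.trans h.radius_lt)))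
  have hlayer : ∀ {y : Esp d × ℝ}, ‖y.1‖ < ρ → y.2 ∈ Ioo (-η) 0 → y ∈ layerCylinder (Esp d) ρ η :=
    fun hx hs => ⟨mem_closedBall_zero_iff.2 hx.le, Ioo_subset_Icc_self hs⟩
  refine ⟨contDiffOn_flatMisfit h₁ h₂ hℓ₁ hmaps,
    contDiffOn_driftHor hℓ₁ hH₁.contDiffOn hmaps,
    contDiffOn_driftVer isOpen_ball (fun y hy => mem_ball_zero_iff.2 (h.norm_fst_lt hy))
      (by simpa only [one_add_one_eq_two] using hℓ) hH₁.contDiffOn hmaps,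
    continuousOn_flatDriftGap h hcollar hℓ.continuousOn hH₁.contDiffOn.continuousOn hH₂,
    integrableOn_sq_iSup_norm_gradient_slice hΩ hΩb h₂.contDiffOn_deriv,
    fun y hx hs => ?_,
    fun y hx hs => h.le_phase_speed hcollar hℓ0 hδ hH₁ hH0 (hlayer hx hs),
    fun z hz hx => ?_⟩
  · have hyΩ := hmaps (hlayer hx hs)
    have hdiv := abs_layerDivergence_drift_le (EuclideanSpace.basisFun (Fin d) ℝ)
      ((hℓat hx).differentiableAt two_ne_zero)
      (((hℓat hx).fderiv_right (m := 1) one_add_one_eq_two.le).differentiableAt one_ne_zero)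
      (hH₁.differentiableAt hyΩ)
    rw [Fintype.card_fin] at hdiv
    exact hdiv.trans (mul_le_mul_of_nonneg_left (hH₁.norm_fderiv_le hyΩ) (by positivity))
  · obtain ⟨hs, ht⟩ := mem_interior_slab.1 hz
    exact abs_fderiv_flatMisfit_le h₁ h₂ hΩ hΩb hp ((hℓat hx).differentiableAt two_ne_zero)
      (h.graphFlat_mem hcollar hx hs) ht

end Misfit

section BoundaryMisfit

variable {d : ℕ} {T M δ ρ₀ c ρ η : ℝ} {k : ℕ} {ℓ : Esp d → ℝ} {Ω : Set (Esp (d + 1))}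
  {p a : Esp (d + 1) → ℝ} {H H₁ H₂ : Esp (d + 1) → Esp (d + 1)} {u₁ u₂ : Esp (d + 1) → ℝ → ℝ}

theorem omegaW_nonneg (ℓ : Esp d → ℝ) (x : Esp d) : 0 ≤ omegaW d ℓ x := Real.sqrt_nonneg _

theorem continuousOn_omegaW {s : Set (Esp d)} (hs : IsOpen s) (hℓ : ContDiffOn ℝ 1 ℓ s) :
    ContinuousOn (omegaW d ℓ) s := fun x hx => by
  simpa only [norm_graphNormal] using
    (continuousAt_graphNormal (hℓ.contDiffAt (hs.mem_nhds hx))).norm.continuousWithinAt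

theorem exists_omegaW_le (hℓ : ContDiffOn ℝ 1 ℓ (closedBall 0 ρ₀)) :
    ∃ L, ∀ x ∈ ball 0 ρ₀, omegaW d ℓ x ≤ L := by
  obtain ⟨C, hC⟩ := exists_norm_fderiv_interior_le_of_contDiffOn_one (isCompact_closedBall _ _) hℓ
  refine ⟨√(1 + C ^ 2), fun x hx => Real.sqrt_le_sqrt ?_⟩
  gcongr
  exact (norm_gradient ℓ x).trans_le (hC x (ball_subset_interior_closedBall hx))

theorem boundaryMisfit_eq (T ρ₀ : ℝ) (ℓ : Esp d → ℝ) (u₁ u₂ : Esp (d + 1) → ℝ → ℝ) :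
    boundaryMisfit T ρ₀ ℓ u₁ u₂ = ∫ t in Ioo 0 T, ∫ x in ball (0 : Esp d) ρ₀,
      flatMisfit ℓ u₁ u₂ ((x, 0), t) ^ 2 * omegaW d ℓ x := by
  simp only [flatMisfit_zero_right, boundaryMisfit]

theorem boundaryMisfit_nonneg (T ρ₀ : ℝ) (ℓ : Esp d → ℝ) (u₁ u₂ : Esp (d + 1) → ℝ → ℝ) :
    0 ≤ boundaryMisfit T ρ₀ ℓ u₁ u₂ :=
  integral_nonneg fun _ => integral_nonneg fun x => mul_nonneg (sq_nonneg _) (omegaW_nonneg ℓ x)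

theorem exists_abs_flatMisfit_le (h₁ : IsTransportSolution T Ω p a H₁ u₁)
    (h₂ : IsTransportSolution T Ω p a H₂ u₂) (hΩb : Bornology.IsBounded Ω) (ℓ : Esp d → ℝ) :
    ∃ C, ∀ y, graphFlat ℓ y ∈ closure Ω → ∀ t ∈ Icc 0 T, |flatMisfit ℓ u₁ u₂ (y, t)| ≤ C := by
  obtain ⟨C, hC⟩ := (hΩb.isCompact_closure.prod isCompact_Icc).exists_bound_of_continuousOn
    (h₁.contDiffOn_deriv.sub h₂.contDiffOn_deriv).continuousOn
  exact ⟨C, fun y hy t ht => hC (graphFlat ℓ y, t) ⟨hy, ht⟩⟩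

theorem integrable_boundaryMisfit (h₁ : IsTransportSolution T Ω p a H₁ u₁)
    (h₂ : IsTransportSolution T Ω p a H₂ u₂) (hΩb : Bornology.IsBounded Ω)
    (hcollar : ContainsSubgraphCollar ρ₀ c ℓ Ω) (hc : 0 < c)
    (hℓ : ContDiffOn ℝ 1 ℓ (closedBall 0 ρ₀)) :
    Integrable (fun q : ℝ × Esp d => flatMisfit ℓ u₁ u₂ ((q.2, 0), q.1) ^ 2 * omegaW d ℓ q.2)
      ((volume.restrict (Ioo 0 T)).prod (volume.restrict (ball 0 ρ₀))) := by
  obtain ⟨C, hC⟩ := exists_abs_flatMisfit_le h₁ h₂ hΩb ℓ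
  obtain ⟨L, hL⟩ := exists_omegaW_le hℓ
  have hclosure : ∀ {x}, x ∈ ball (0 : Esp d) ρ₀ → graphFlat ℓ (x, 0) ∈ closure Ω := fun hx =>
    hcollar.graphFlat_mem_closure (mem_ball_zero_iff.1 hx) (right_mem_Ioc.2 (neg_lt_zero.2 hc))
  have hmaps : MapsTo (graphFlat ℓ) (ball 0 ρ₀ ×ˢ {0}) (closure Ω) := by
    rintro ⟨x, s⟩ ⟨hx, rfl⟩
    exact hclosure hx
  have htrace : ContinuousOn (flatMisfit ℓ u₁ u₂) ((ball 0 ρ₀ ×ˢ {0}) ×ˢ Icc 0 T) :=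
    (contDiffOn_flatMisfit h₁ h₂ (hℓ.mono (image_subset_iff.2 fun _ hy =>
      ball_subset_closedBall hy.1)) hmaps).continuousOn
  have hcont : ContinuousOn (fun q : ℝ × Esp d =>
      flatMisfit ℓ u₁ u₂ ((q.2, 0), q.1) ^ 2 * omegaW d ℓ q.2) (Ioo 0 T ×ˢ ball 0 ρ₀) :=
    ((htrace.comp (f := fun q : ℝ × Esp d => ((q.2, 0), q.1)) (by fun_prop) fun q hq =>
      ⟨⟨hq.2, mem_singleton _⟩, Ioo_subset_Icc_self hq.1⟩).pow 2).mul
      ((continuousOn_omegaW isOpen_ball (hℓ.mono ball_subset_closedBall)).comp continuousOn_snd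
        fun _ hq => hq.2)
  have hmeas : MeasurableSet (Ioo 0 T ×ˢ ball (0 : Esp d) ρ₀) :=
    measurableSet_Ioo.prod measurableSet_ball
  rw [Measure.prod_restrict]
  refine IntegrableOn.of_bound (C := C ^ 2 * L) ?_ (hcont.aestronglyMeasurable hmeas) ?_
  · rw [← Measure.volume_eq_prod, Measure.volume_eq_prod, Measure.prod_prod]
    exact ENNReal.mul_lt_top measure_Ioo_lt_top measure_ball_lt_top
  · filter_upwards [ae_restrict_mem hmeas] with q hq
    have hω := omegaW_nonneg ℓ q.2
    rw [Real.norm_of_nonneg (by positivity), ← sq_abs]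
    gcongr
    · exact hC _ (hclosure hq.2) _ (Ioo_subset_Icc_self hq.1)
    · exact hL _ hq.2

theorem slabWeight_le_pow (hη : 0 ≤ η) {z : (Esp d × ℝ) × ℝ} (hz : z ∈ slab (Esp d) η T) :
    slabWeight η T k z ≤ η ^ (k + 2) :=
  pow_le_pow_left₀ (le_max_right _ _)
    (max_le ((slabPhase_le hη hz).trans (sub_le_self _ (sq_nonneg _))) hη) _

theorem driftVer_le_mul_omegaW {y : Esp d × ℝ} (hM : ‖H (graphFlat ℓ y)‖ ≤ M) :
    driftVer ℓ H y ≤ M * omegaW d ℓ y.1 := by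
  rw [driftVer_eq_inner, ← norm_graphNormal]
  exact (real_inner_le_norm _ _).trans (mul_le_mul_of_nonneg_right hM (norm_nonneg _))

section Flux

variable (h : IsAdaptedLayer T M δ ρ₀ c ℓ ρ η) {t : ℝ}
include h

theorem mem_slab_of_mem_Ioo (ht : t ∈ Ioo 0 T) (x : Esp d) : ((x, 0), t) ∈ slab (Esp d) η T :=
  ⟨⟨mem_univ x, right_mem_Icc.2 (neg_nonpos.2 h.depth_pos.le)⟩, Ioo_subset_Icc_self ht⟩

theorem mem_layerCylinder_of_norm_lt {x : Esp d} (hx : ‖x‖ < ρ) :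
    (x, (0 : ℝ)) ∈ layerCylinder (Esp d) ρ η :=
  ⟨mem_closedBall_zero_iff.2 hx.le, right_mem_Icc.2 (neg_nonpos.2 h.depth_pos.le)⟩

theorem slabWeight_boundary_eq_zero (ht : t ∈ Ioo 0 T) {x : Esp d} (hx : ρ ≤ ‖x‖) :
    slabWeight η T k ((x, 0), t) = 0 :=
  slabWeight_eq_zero_of_sqrt_le_norm h.depth_pos.le (mem_slab_of_mem_Ioo h ht x)
    (h.sqrt_depth_lt.le.trans hx)

variable (hδ : 0 ≤ δ) (hcollar : ContainsSubgraphCollar ρ₀ c ℓ Ω) (hℓ0 : ℓ 0 = 0)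
  (hH : IsC1BoundedNear M (closure Ω) H) (hH0 : δ < ⟪H 0, nuUp d ℓ 0⟫)
include hδ hcollar hℓ0 hH hH0

theorem boundary_flux_nonneg (v : (Esp d × ℝ) × ℝ → ℝ) (ht : t ∈ Ioo 0 T) (x : Esp d) :
    0 ≤ v ((x, 0), t) ^ 2 * slabWeight η T k ((x, 0), t) * driftVer ℓ H (x, 0) := by
  rcases lt_or_ge ‖x‖ ρ with hx | hx
  · exact mul_nonneg (mul_nonneg (sq_nonneg _) (slabWeight_nonneg _ _ _ _))
      (h.driftVer_nonneg hcollar hℓ0 hδ hH hH0 (mem_layerCylinder_of_norm_lt h hx))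
  · rw [slabWeight_boundary_eq_zero h ht hx, mul_zero, zero_mul]

theorem boundary_flux_le_indicator (v : (Esp d × ℝ) × ℝ → ℝ) (ht : t ∈ Ioo 0 T) (x : Esp d) :
    v ((x, 0), t) ^ 2 * slabWeight η T k ((x, 0), t) * driftVer ℓ H (x, 0) ≤
      (ball 0 ρ₀).indicator
        (fun x => η ^ (k + 2) * M * (v ((x, 0), t) ^ 2 * omegaW d ℓ x)) x := by
  have hη := h.depth_pos.le
  rcases lt_or_ge ‖x‖ ρ with hx | hx
  · have hy := mem_layerCylinder_of_norm_lt h hx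
    have hdrift := h.driftVer_nonneg hcollar hℓ0 hδ hH hH0 hy
    rw [indicator_of_mem (mem_ball_zero_iff.2 (hx.trans h.radius_lt))]
    calc _ ≤ v ((x, 0), t) ^ 2 * η ^ (k + 2) * (M * omegaW d ℓ x) := by
          gcongr
          · exact slabWeight_le_pow hη (mem_slab_of_mem_Ioo h ht x)
          · exact driftVer_le_mul_omegaW (hH.norm_le (h.mapsTo_closure hcollar hy))
      _ = _ := by ring
  · have hM : 0 ≤ M := (norm_nonneg _).trans (hH.norm_le (h.zero_mem_closure hcollar hℓ0))
    rw [slabWeight_boundary_eq_zero h ht hx, mul_zero, zero_mul]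
    refine indicator_nonneg (fun x _ => ?_) x
    have hω := omegaW_nonneg ℓ x
    positivity

theorem integral_boundary_flux_le (hΩb : Bornology.IsBounded Ω)
    (hℓ : ContDiffOn ℝ 1 ℓ (closedBall 0 ρ₀)) (h₁ : IsTransportSolution T Ω p a H₁ u₁)
    (h₂ : IsTransportSolution T Ω p a H₂ u₂) :
    ∫ t in Ioo 0 T, ∫ x, flatMisfit ℓ u₁ u₂ ((x, 0), t) ^ 2 * slabWeight η T k ((x, 0), t) *
      driftVer ℓ H (x, 0) ≤ η ^ (k + 2) * M * boundaryMisfit T ρ₀ ℓ u₁ u₂ := by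
  simp only [boundaryMisfit_eq, ← integral_const_mul]
  refine integral_integral_le_of_le_indicator measurableSet_ball
    ((integrable_boundaryMisfit h₁ h₂ hΩb hcollar (h.depth_pos.trans h.depth_lt) hℓ).const_mul _)
    ?_ ?_
  · filter_upwards [ae_restrict_mem measurableSet_Ioo] with t ht using
      boundary_flux_nonneg h hδ hcollar hℓ0 hH hH0 _ ht
  · filter_upwards [ae_restrict_mem measurableSet_Ioo] with t ht using
      boundary_flux_le_indicator h hδ hcollar hℓ0 hH hH0 _ ht

end Flux

end BoundaryMisfit

section DriftGap

variable {d : ℕ} {T M M₀ δ ρ₀ c ρ η C₀ lam c₀ : ℝ} {k : ℕ} {ℓ : Esp d → ℝ} {Ω : Set (Esp (d + 1))}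
  {p : Esp (d + 1) → ℝ} {H₁ H₂ : Esp (d + 1) → Esp (d + 1)}

section SingleDatum

variable {a : Esp (d + 1) → ℝ} {u₁ u₂ : Esp (d + 1) → ℝ → ℝ}

theorem initialEnergy_flatMisfit_le (h : IsAdaptedLayer T M δ ρ₀ c ℓ ρ η) (hT : 0 < T) (hδ : 0 ≤ δ)
    (hΩ : IsOpen Ω) (hΩb : Bornology.IsBounded Ω) (hcollar : ContainsSubgraphCollar ρ₀ c ℓ Ω)
    (hℓ : ContDiffOn ℝ 2 ℓ (closedBall 0 ρ₀)) (hℓ0 : ℓ 0 = 0) (hp : ∀ x ∈ Ω, |p x| ≤ C₀)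
    (hH₁ : IsC1BoundedNear M (closure Ω) H₁) (hH0 : δ < ⟪H₁ 0, nuUp d ℓ 0⟫)
    (hH₂ : ContinuousOn H₂ (closure Ω)) (h₁ : IsTransportSolution T Ω p a H₁ u₁)
    (h₂ : IsTransportSolution T Ω p a H₂ u₂)
    (hM₀ : ∫ t in Ioo 0 T, (⨆ z : Ω, ‖gradient (fun z => deriv (u₂ z) t) (z : Esp (d + 1))‖) ^ 2 ≤
      M₀ ^ 2) (hlam : 0 < lam) (hk : 2 * C₀ + (d + 1) * M + lam ≤ (k + 2) / η * (δ / 4)) :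
    initialEnergy η T k (fun y => flatMisfit ℓ u₁ u₂ (y, 0)) ≤
      η ^ (k + 2) * M * boundaryMisfit T ρ₀ ℓ u₁ u₂ +
        lam⁻¹ * (initialEnergy η T k (flatDriftGap ℓ H₁ H₂) * M₀ ^ 2) := by
  refine ((isSlabTransportInequality_flatMisfit h hδ hΩ hΩb hcollar
    (hℓ.mono ball_subset_closedBall) hℓ0 hp hH₁ hH0 hH₂ h₁ h₂).weighted_energy_le h.depth_pos hT
    h.sqrt_depth_lt (by positivity) hlam hk).trans ?_
  have hgap := initialEnergy_nonneg η T k (flatDriftGap ℓ H₁ H₂)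
  gcongr
  exact integral_boundary_flux_le h hδ hcollar hℓ0 hH₁ hH0 hΩb (hℓ.of_le one_le_two) h₁ h₂

theorem integrable_sq_flatDriftGap (h : IsAdaptedLayer T M δ ρ₀ c ℓ ρ η) (hT : 0 ≤ T)
    (hcollar : ContainsSubgraphCollar ρ₀ c ℓ Ω) (hℓ : ContinuousOn ℓ (ball 0 ρ₀))
    (hH₁ : ContinuousOn H₁ (closure Ω)) (hH₂ : ContinuousOn H₂ (closure Ω)) :
    Integrable (fun y => flatDriftGap ℓ H₁ H₂ y ^ 2 * slabWeight η T k (y, 0))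
      (layerMeasure (Esp d) η) :=
  integrable_mul_slabWeight_initial h.depth_pos.le hT h.sqrt_depth_lt
    ((continuousOn_flatDriftGap h hcollar hℓ hH₁ hH₂).pow 2)

theorem integrable_sq_flatMisfit_initial (h : IsAdaptedLayer T M δ ρ₀ c ℓ ρ η) (hT : 0 ≤ T)
    (hcollar : ContainsSubgraphCollar ρ₀ c ℓ Ω) (hℓ : ContDiffOn ℝ 1 ℓ (ball 0 ρ₀))
    (h₁ : IsTransportSolution T Ω p a H₁ u₁) (h₂ : IsTransportSolution T Ω p a H₂ u₂) :
    Integrable (fun y => flatMisfit ℓ u₁ u₂ (y, 0) ^ 2 * slabWeight η T k (y, 0))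
      (layerMeasure (Esp d) η) :=
  integrable_mul_slabWeight_initial h.depth_pos.le hT h.sqrt_depth_lt
    (((contDiffOn_flatMisfit h₁ h₂ (hℓ.mono h.image_fst_subset)
      (h.mapsTo_closure hcollar)).continuousOn.comp (f := fun y => (y, (0 : ℝ))) (by fun_prop)
        fun _ hy => ⟨hy, left_mem_Icc.2 hT⟩).pow 2)

end SingleDatum

variable {ι : Type*} [Fintype ι] {a : ι → Esp (d + 1) → ℝ} {u₁ u₂ : ι → Esp (d + 1) → ℝ → ℝ}

theorem mul_initialEnergy_flatDriftGap_le (h : IsAdaptedLayer T M δ ρ₀ c ℓ ρ η) (hT : 0 < T)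
    (hΩ : IsOpen Ω) (hcollar : ContainsSubgraphCollar ρ₀ c ℓ Ω)
    (hℓ : ContDiffOn ℝ 1 ℓ (ball 0 ρ₀))
    (ha : ∀ y ∈ layerCylinder (Esp d) ρ η, graphFlat ℓ y ∈ Ω →
      ∀ v, c₀ * ‖v‖ ^ 2 ≤ ∑ j, (fderiv ℝ (a j) (graphFlat ℓ y) v) ^ 2)
    (hH₁ : ContinuousOn H₁ (closure Ω)) (hH₂ : ContinuousOn H₂ (closure Ω))
    (h₁ : ∀ j, IsTransportSolution T Ω p (a j) H₁ (u₁ j))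
    (h₂ : ∀ j, IsTransportSolution T Ω p (a j) H₂ (u₂ j)) :
    c₀ * initialEnergy η T k (flatDriftGap ℓ H₁ H₂) ≤
      ∑ j, initialEnergy η T k fun y => flatMisfit ℓ (u₁ j) (u₂ j) (y, 0) := by
  have hgap := integrable_sq_flatDriftGap (k := k) h hT.le hcollar hℓ.continuousOn hH₁ hH₂
  have hmisfit := fun j =>
    integrable_sq_flatMisfit_initial (k := k) h hT.le hcollar hℓ (h₁ j) (h₂ j)
  simp only [initialEnergy]
  rw [← integral_finsetSum _ fun j _ => hmisfit j, ← integral_const_mul]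
  refine integral_mono_ae (hgap.const_mul c₀) (integrable_finsetSum _ fun j _ => hmisfit j) ?_
  filter_upwards [ae_layerMeasure_snd_mem (Esp d) η] with y hy
  rcases lt_or_ge ‖y.1‖ ρ with hx | hx
  · have hyΩ := h.graphFlat_mem hcollar hx hy
    have hlower := ha y ⟨mem_closedBall_zero_iff.2 hx.le, Ioo_subset_Icc_self hy⟩ hyΩ
      (H₁ (graphFlat ℓ y) - H₂ (graphFlat ℓ y))
    rw [← Finset.sum_mul, ← mul_assoc]
    refine mul_le_mul_of_nonneg_right ?_ (slabWeight_nonneg _ _ _ _)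
    simpa only [flatDriftGap, flatMisfit, (h₁ _).deriv_zero_sub (h₂ _) hΩ hT hyΩ, neg_sq]
      using hlower
  · have hweight : slabWeight η T k (y, 0) = 0 := slabWeight_eq_zero_of_sqrt_le_norm h.depth_pos.le
      ⟨⟨mem_univ _, Ioo_subset_Icc_self hy⟩, left_mem_Icc.2 hT.le⟩ (h.sqrt_depth_lt.le.trans hx)
    simp only [hweight, mul_zero, Finset.sum_const_zero, le_refl]

-- For `lam = 2 |ι| M₀² / c₀` the energy of the gap on the right is half of the one on the left.
theorem initialEnergy_flatDriftGap_le (h : IsAdaptedLayer T M δ ρ₀ c ℓ ρ η) (hT : 0 < T)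
    (hδ : 0 ≤ δ) (hΩ : IsOpen Ω) (hΩb : Bornology.IsBounded Ω)
    (hcollar : ContainsSubgraphCollar ρ₀ c ℓ Ω) (hℓ : ContDiffOn ℝ 2 ℓ (closedBall 0 ρ₀))
    (hℓ0 : ℓ 0 = 0) (hp : ∀ x ∈ Ω, |p x| ≤ C₀) (hc₀ : 0 < c₀) (hM₀ : 0 < M₀) [Nonempty ι]
    (ha : ∀ y ∈ layerCylinder (Esp d) ρ η, graphFlat ℓ y ∈ Ω →
      ∀ v, c₀ * ‖v‖ ^ 2 ≤ ∑ j, (fderiv ℝ (a j) (graphFlat ℓ y) v) ^ 2)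
    (hk : 2 * C₀ + (d + 1) * M + 2 * Fintype.card ι * M₀ ^ 2 / c₀ ≤ (k + 2) / η * (δ / 4))
    (hH₁ : IsC1BoundedNear M (closure Ω) H₁) (hH0 : δ < ⟪H₁ 0, nuUp d ℓ 0⟫)
    (hH₂ : ContinuousOn H₂ (closure Ω))
    (h₁ : ∀ j, IsTransportSolution T Ω p (a j) H₁ (u₁ j))
    (h₂ : ∀ j, IsTransportSolution T Ω p (a j) H₂ (u₂ j))
    (hu₂ : ∀ j, ∫ t in Ioo 0 T,
      (⨆ z : Ω, ‖gradient (fun z => deriv (u₂ j z) t) (z : Esp (d + 1))‖) ^ 2 ≤ M₀ ^ 2) :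
    initialEnergy η T k (flatDriftGap ℓ H₁ H₂) ≤
      2 / c₀ * (η ^ (k + 2) * M) * ∑ j, boundaryMisfit T ρ₀ ℓ (u₁ j) (u₂ j) := by
  set I := initialEnergy η T k (flatDriftGap ℓ H₁ H₂)
  have hlower : c₀ * I ≤ _ := mul_initialEnergy_flatDriftGap_le h hT hΩ hcollar
    ((hℓ.of_le one_le_two).mono ball_subset_closedBall) ha hH₁.contDiffOn.continuousOn hH₂ h₁ h₂
  have henergy := Finset.sum_le_sum fun j (_ : j ∈ Finset.univ) =>
    initialEnergy_flatMisfit_le h hT hδ hΩ hΩb hcollar hℓ hℓ0 hp hH₁ hH0 hH₂ (h₁ j) (h₂ j) (hu₂ j)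
      (div_pos (by positivity) hc₀) hk
  rw [Finset.sum_add_distrib, ← Finset.mul_sum, Finset.sum_const, Finset.card_univ,
    nsmul_eq_mul] at henergy
  have habsorb : Fintype.card ι * ((2 * Fintype.card ι * M₀ ^ 2 / c₀)⁻¹ * (I * M₀ ^ 2)) =
      c₀ / 2 * I := by
    field_simp
  rw [habsorb] at henergy
  rw [div_mul_eq_mul_div, div_mul_eq_mul_div, le_div_iff₀ hc₀]
  linarith [hlower.trans henergy]

end DriftGap

section GraphDepth

variable {d : ℕ} {T M δ ρ₀ c ρ η : ℝ} {k : ℕ} {ℓ : Esp d → ℝ} {Ω : Set (Esp (d + 1))} {x : Esp d}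

/-- `h` is the thickness of a domain of graph type over the ball of radius `ρ`: it is `C²`, positive
inside the ball, and vanishes to first order on the sphere. -/
structure IsDepthProfile (ρ : ℝ) (h : Esp d → ℝ) : Prop where
  contDiffOn : ContDiffOn ℝ 2 h (closedBall 0 ρ)
  pos : ∀ x, ‖x‖ < ρ → 0 < h x
  eq_zero : ∀ x, ‖x‖ = ρ → h x = 0 ∧ gradient h x = 0

/-- A depth profile over the ball of radius `√(η / 2)`. It is normalised so that it lies below the
paraboloid `η / 2 - |x|²`, hence `slabPhase η T` is at least `η / 2` at time `0` on the domain of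
this depth. -/
def graphDepth (η : ℝ) (x : Esp d) : ℝ := 2 / η * (η / 2 - ‖x‖ ^ 2) ^ 2

theorem contDiff_graphDepth (η : ℝ) {n : WithTop ℕ∞} : ContDiff ℝ n (graphDepth (d := d) η) :=
  contDiff_const.mul ((contDiff_const.sub (contDiff_norm_sq ℝ)).pow 2)

theorem sq_norm_lt_half (hx : ‖x‖ < √(η / 2)) : ‖x‖ ^ 2 < η / 2 :=
  (Real.lt_sqrt (norm_nonneg x)).1 hx

theorem gradient_graphDepth_eq_zero (hx : ‖x‖ ^ 2 = η / 2) : gradient (graphDepth η) x = 0 := by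
  have hparaboloid : HasFDerivAt (fun y : Esp d => η / 2 - ‖y‖ ^ 2) _ x :=
    ((contDiff_const.sub (contDiff_norm_sq ℝ)).differentiable one_ne_zero x).hasFDerivAt
  have hderiv : HasFDerivAt (graphDepth η) _ x := (hparaboloid.pow 2).const_mul (2 / η)
  have hzero : fderiv ℝ (graphDepth η) x = 0 := by
    rw [hderiv.fderiv, hx, sub_self]
    simp
  rw [gradient, hzero, map_zero]

theorem isDepthProfile_graphDepth (hη : 0 < η) :
    IsDepthProfile (d := d) √(η / 2) (graphDepth η) where
  contDiffOn := (contDiff_graphDepth η).contDiffOn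
  pos x hx := mul_pos (by positivity) (pow_pos (sub_pos.2 (sq_norm_lt_half hx)) 2)
  eq_zero x hx := by
    have hsq : ‖x‖ ^ 2 = η / 2 := by rw [hx, Real.sq_sqrt (by positivity)]
    exact ⟨by rw [graphDepth, hsq, sub_self, zero_pow two_ne_zero, mul_zero],
      gradient_graphDepth_eq_zero hsq⟩

theorem graphDepth_le (hη : 0 < η) (hx : ‖x‖ < √(η / 2)) : graphDepth η x ≤ η / 2 - ‖x‖ ^ 2 := by
  have hpos : 0 ≤ η / 2 - ‖x‖ ^ 2 := sub_nonneg.2 (sq_norm_lt_half hx).le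
  calc graphDepth η x = 2 / η * (η / 2 - ‖x‖ ^ 2) * (η / 2 - ‖x‖ ^ 2) := by rw [graphDepth]; ring
    _ ≤ 2 / η * (η / 2) * (η / 2 - ‖x‖ ^ 2) := by
        gcongr
        exact sub_le_self _ (sq_nonneg _)
    _ = η / 2 - ‖x‖ ^ 2 := by field_simp

theorem graphDepth_le_self (hη : 0 < η) (hx : ‖x‖ < √(η / 2)) : graphDepth η x ≤ η := by
  linarith [graphDepth_le hη hx, sq_nonneg ‖x‖]

theorem half_pow_le_slabWeight_initial (hη : 0 < η) {y : Esp d × ℝ}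
    (hy : y ∈ flatDomain √(η / 2) (graphDepth η)) :
    (η / 2) ^ (k + 2) ≤ slabWeight η T k (y, 0) := by
  refine pow_le_pow_left₀ (half_pos hη).le (le_max_of_le_left ?_) _
  simp only [slabPhase, zero_div, sub_zero, mul_one]
  linarith [graphDepth_le hη hy.1, hy.2.1]

theorem zero_mem_frontier_graphDomain (hρ : 0 < ρ) {h : Esp d → ℝ} (hℓ0 : ℓ 0 = 0) (hh : 0 < h 0)
    (hΩ : graphDomain d ρ ℓ h ⊆ Ω) (h0 : (0 : Esp (d + 1)) ∉ Ω) :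
    (0 : Esp (d + 1)) ∈ frontier (graphDomain d ρ ℓ h) := by
  refine ⟨?_, fun hmem => h0 (hΩ (interior_subset hmem))⟩
  have hvertical : Continuous fun r : ℝ => graphFlat ℓ (0, r) := by
    simp only [graphFlat_eq]
    fun_prop
  have hlim := (hvertical.tendsto 0).mono_left (nhdsWithin_le_nhds (s := Iio 0))
  rw [← Prod.zero_eq_mk, graphFlat_zero hℓ0] at hlim
  refine mem_closure_of_tendsto hlim ?_
  filter_upwards [Ioo_mem_nhdsLT (neg_lt_zero.2 hh)] with r hr
  rw [graphDomain_eq_image]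
  exact mem_image_of_mem _ ⟨by rwa [norm_zero], hr⟩

namespace IsAdaptedLayer

theorem sqrt_half_depth_lt (h : IsAdaptedLayer T M δ ρ₀ c ℓ ρ η) : √(η / 2) < ρ₀ :=
  ((Real.sqrt_le_sqrt (half_le_self h.depth_pos.le)).trans_lt h.sqrt_depth_lt).trans h.radius_lt

theorem graphDomain_subset (h : IsAdaptedLayer T M δ ρ₀ c ℓ ρ η)
    (hΩ : ContainsSubgraphCollar ρ₀ c ℓ Ω) : graphDomain d √(η / 2) ℓ (graphDepth η) ⊆ Ω := by
  rintro _ ⟨x, r, hx, hlower, hupper, rfl⟩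
  exact hΩ x r (hx.trans h.sqrt_half_depth_lt)
    (by linarith [graphDepth_le_self h.depth_pos hx, h.depth_lt]) hupper

theorem mul_setIntegral_sq_norm_sub_le (h : IsAdaptedLayer T M δ ρ₀ c ℓ ρ η) (hT : 0 ≤ T)
    (hΩ : ContainsSubgraphCollar ρ₀ c ℓ Ω) (hℓ : ContinuousOn ℓ (ball 0 ρ₀))
    {H₁ H₂ : Esp (d + 1) → Esp (d + 1)} (hH₁ : ContinuousOn H₁ (closure Ω))
    (hH₂ : ContinuousOn H₂ (closure Ω)) :
    (η / 2) ^ (k + 2) * ∫ x in graphDomain d √(η / 2) ℓ (graphDepth η), ‖H₁ x - H₂ x‖ ^ 2 ≤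
      initialEnergy η T k (flatDriftGap ℓ H₁ H₂) :=
  mul_setIntegral_graphDomain_le (pow_pos (half_pos h.depth_pos) _)
    (hℓ.mono (ball_subset_ball h.sqrt_half_depth_lt.le)) (contDiff_graphDepth (n := 0) η).continuous
    (fun _ => graphDepth_le_self h.depth_pos) (fun _ => sq_nonneg _)
    (fun _ => slabWeight_nonneg _ _ _ _) (fun _ => half_pow_le_slabWeight_initial h.depth_pos)
    (integrable_sq_flatDriftGap h hT hΩ hℓ hH₁ hH₂)

end IsAdaptedLayer

end GraphDepth

section Stability

theorem sqrt_sum_le_sum_sqrt {ι : Type*} (s : Finset ι) {f : ι → ℝ} (hf : ∀ i, 0 ≤ f i) :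
    √(∑ i ∈ s, f i) ≤ ∑ i ∈ s, √(f i) := by
  rw [Real.sqrt_le_left (Finset.sum_nonneg fun i _ => Real.sqrt_nonneg _)]
  calc ∑ i ∈ s, f i = ∑ i ∈ s, √(f i) ^ 2 := by simp only [Real.sq_sqrt (hf _)]
    _ ≤ _ := Finset.sum_sq_le_sq_sum_of_nonneg fun i _ => Real.sqrt_nonneg _

theorem exists_nat_le_add_two_div_mul {η γ : ℝ} (hη : 0 < η) (hγ : 0 < γ) (b : ℝ) :
    ∃ k : ℕ, b ≤ (k + 2) / η * γ := by
  obtain ⟨k, hk⟩ := exists_nat_ge (b / γ * η)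
  refine ⟨k, (div_le_iff₀ hγ).1 ((le_div_iff₀ hη).2 (hk.trans ?_))⟩
  linarith

variable {d : ℕ} {T M M₀ δ ρ₀ c ρ η C₀ c₀ : ℝ} {k : ℕ} {ℓ : Esp d → ℝ} {Ω : Set (Esp (d + 1))}
  {p : Esp (d + 1) → ℝ} {H₁ H₂ : Esp (d + 1) → Esp (d + 1)}

theorem setIntegral_graphDomain_sq_norm_sub_le (h : IsAdaptedLayer T M δ ρ₀ c ℓ ρ η) (hT : 0 < T)
    (hδ : 0 ≤ δ) (hΩ : IsOpen Ω) (hΩb : Bornology.IsBounded Ω)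
    (hcollar : ContainsSubgraphCollar ρ₀ c ℓ Ω) (hℓ : ContDiffOn ℝ 2 ℓ (closedBall 0 ρ₀))
    (hℓ0 : ℓ 0 = 0) (hp : ∀ x ∈ Ω, |p x| ≤ C₀) (hc₀ : 0 < c₀) (hM₀ : 0 < M₀)
    {ι : Type*} [Fintype ι] [Nonempty ι] {a : ι → Esp (d + 1) → ℝ}
    (ha : ∀ y ∈ layerCylinder (Esp d) ρ η, graphFlat ℓ y ∈ Ω →
      ∀ v, c₀ * ‖v‖ ^ 2 ≤ ∑ j, (fderiv ℝ (a j) (graphFlat ℓ y) v) ^ 2)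
    (hk : 2 * C₀ + (d + 1) * M + 2 * Fintype.card ι * M₀ ^ 2 / c₀ ≤ (k + 2) / η * (δ / 4))
    (hH₁ : IsC1BoundedNear M (closure Ω) H₁) (hH0 : δ < ⟪H₁ 0, nuUp d ℓ 0⟫)
    (hH₂ : ContinuousOn H₂ (closure Ω)) {u₁ u₂ : ι → Esp (d + 1) → ℝ → ℝ}
    (h₁ : ∀ j, IsTransportSolution T Ω p (a j) H₁ (u₁ j))
    (h₂ : ∀ j, IsTransportSolution T Ω p (a j) H₂ (u₂ j))
    (hu₂ : ∀ j, ∫ t in Ioo 0 T,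
      (⨆ z : Ω, ‖gradient (fun z => deriv (u₂ j z) t) (z : Esp (d + 1))‖) ^ 2 ≤ M₀ ^ 2) :
    ∫ x in graphDomain d √(η / 2) ℓ (graphDepth η), ‖H₁ x - H₂ x‖ ^ 2 ≤
      2 ^ (k + 3) * M / c₀ * ∑ j, boundaryMisfit T ρ₀ ℓ (u₁ j) (u₂ j) := by
  have hη := h.depth_pos
  refine le_of_mul_le_mul_left ?_ (pow_pos (half_pos hη) (k + 2))
  calc _ ≤ initialEnergy η T k (flatDriftGap ℓ H₁ H₂) := h.mul_setIntegral_sq_norm_sub_le hT.le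
        hcollar (hℓ.continuousOn.mono ball_subset_closedBall) hH₁.contDiffOn.continuousOn hH₂
    _ ≤ 2 / c₀ * (η ^ (k + 2) * M) * ∑ j, boundaryMisfit T ρ₀ ℓ (u₁ j) (u₂ j) :=
        initialEnergy_flatDriftGap_le h hT hδ hΩ hΩb hcollar hℓ hℓ0 hp hc₀ hM₀ ha hk hH₁ hH0 hH₂
          h₁ h₂ hu₂
    _ = _ := by
        rw [div_pow]
        field_simp
        ring

theorem theorem1_local_stability_inverse_drift_general (hT : 0 < T) (hρ₀ : 0 < ρ₀) (hM : 0 < M)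
    (hδ : 0 < δ) (hc : 0 < c) (hℓ : ContDiffOn ℝ 2 ℓ (closedBall 0 ρ₀)) (hℓ0 : ℓ 0 = 0)
    (hΩ : IsOpen Ω) (hΩb : Bornology.IsBounded Ω) (hcollar : ContainsSubgraphCollar ρ₀ c ℓ Ω)
    (h0 : (0 : Esp (d + 1)) ∉ Ω) (hp : ∀ x ∈ Ω, |p x| ≤ C₀) {a : Fin (d + 1) → Esp (d + 1) → ℝ}
    (ha : ∀ j, ContDiffOn ℝ 1 (a j) (closure Ω))
    (hdet : (Matrix.of fun (i j : Fin (d + 1)) => gradient (a j) 0 i).det ≠ 0) :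
    ∃ ρ₁ ∈ Ioo 0 ρ₀, ∃ h : Esp d → ℝ, IsDepthProfile ρ₁ h ∧ graphDomain d ρ₁ ℓ h ⊆ Ω ∧
      (0 : Esp (d + 1)) ∈ frontier (graphDomain d ρ₁ ℓ h) ∩ frontier Ω ∧
      ∀ M₀ > 0, ∃ C > 0, ∀ H₁ H₂ : Esp (d + 1) → Esp (d + 1),
        IsC1BoundedNear M (closure Ω) H₁ → δ < ⟪H₁ 0, nuUp d ℓ 0⟫ → ContinuousOn H₂ (closure Ω) →
        ∀ u₁ u₂ : Fin (d + 1) → Esp (d + 1) → ℝ → ℝ,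
          (∀ j, IsTransportSolution T Ω p (a j) H₁ (u₁ j)) →
          (∀ j, IsTransportSolution T Ω p (a j) H₂ (u₂ j)) →
          (∀ j, ∫ t in Ioo 0 T,
            (⨆ x : Ω, ‖gradient (fun z => deriv (u₂ j z) t) (x : Esp (d + 1))‖) ^ 2 ≤ M₀ ^ 2) →
          √(∫ x in graphDomain d ρ₁ ℓ h, ‖H₁ x - H₂ x‖ ^ 2) ≤
            C * ∑ j, √(boundaryMisfit T ρ₀ ℓ (u₁ j) (u₂ j)) := by
  have hℓat : ContDiffAt ℝ 2 ℓ 0 := hℓ.contDiffAt (closedBall_mem_nhds 0 hρ₀)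
  have h0closure := hcollar.zero_mem_closure hρ₀ hc hℓ0
  obtain ⟨c₀, hc₀, hcoercive⟩ := exists_eventually_mul_norm_sq_le_sum_sq_fderiv hΩ h0closure
    (hcollar.uniqueDiffWithinAt_closure hρ₀ hc (hℓat.differentiableAt two_ne_zero) hℓ0) ha hdet
  obtain ⟨ρ, η, hlayer, hlower⟩ := exists_isAdaptedLayer M hT hδ hρ₀ hc
    (hℓat.of_le one_le_two) hℓ0 hcoercive
  have hη := hlayer.depth_pos
  have hradius : 0 < √(η / 2) := Real.sqrt_pos.2 (half_pos hη)
  have hprofile : IsDepthProfile (d := d) √(η / 2) (graphDepth η) := isDepthProfile_graphDepth hη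
  have hsubset := hlayer.graphDomain_subset hcollar
  refine ⟨√(η / 2), ⟨hradius, hlayer.sqrt_half_depth_lt⟩, graphDepth η, hprofile, hsubset,
    ⟨zero_mem_frontier_graphDomain hradius hℓ0 (hprofile.pos 0 (by rwa [norm_zero])) hsubset h0,
      h0closure, fun hmem => h0 (interior_subset hmem)⟩, fun M₀ hM₀ => ?_⟩
  obtain ⟨k, hk⟩ := exists_nat_le_add_two_div_mul hη (div_pos hδ four_pos)
    (2 * C₀ + (d + 1) * M + 2 * Fintype.card (Fin (d + 1)) * M₀ ^ 2 / c₀)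
  refine ⟨√(2 ^ (k + 3) * M / c₀), by positivity, fun H₁ H₂ hH₁ hH0 hH₂ u₁ u₂ h₁ h₂ hu₂ => ?_⟩
  refine (Real.sqrt_le_sqrt (setIntegral_graphDomain_sq_norm_sub_le hlayer hT hδ.le hΩ hΩb hcollar
    hℓ hℓ0 hp hc₀ hM₀ hlower hk hH₁ hH0 hH₂ h₁ h₂ hu₂)).trans ?_
  rw [Real.sqrt_mul (by positivity)]
  gcongr
  exact sqrt_sum_le_sum_sqrt _ fun j => boundaryMisfit_nonneg T ρ₀ ℓ (u₁ j) (u₂ j)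

end Stability

/-- **Theorem 1** (local Hölder stability for the inverse drift problem). -/
theorem theorem1_local_stability_inverse_drift
    (d : ℕ) (hd : 1 ≤ d) (T ρ₀ M δ₀ c : ℝ)
    (hT : 0 < T) (hρ₀ : 0 < ρ₀) (hM : 0 < M) (hδ₀ : 0 < δ₀) (hc : 0 < c)
    (ℓ : Esp d → ℝ) (hℓ : ContDiffOn ℝ 2 ℓ (closedBall 0 ρ₀)) (hℓ0 : ℓ 0 = 0)
    (Ω : Set (Esp (d+1))) (hΩo : IsOpen Ω) (hΩb : Bornology.IsBounded Ω)
    (hΩsub : ∀ (x' : Esp d) (xn : ℝ), ‖x'‖ < ρ₀ → ℓ x' - c < xn → xn < ℓ x' →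
      graphMk d x' xn ∈ Ω)
    (hΩdis : ∀ (x' : Esp d) (xn : ℝ), ‖x'‖ < ρ₀ → ℓ x' ≤ xn → xn < ℓ x' + c →
      graphMk d x' xn ∉ Ω)
    (p : Esp (d+1) → ℝ) (hp : ContinuousOn p (closure Ω))
    (hpb : ∃ Cp : ℝ, ∀ x ∈ closure Ω, |p x| ≤ Cp)
    (a : Fin (d+1) → Esp (d+1) → ℝ)
    (ha : ∀ k, ContDiffOn ℝ 1 (a k) (closure Ω))
    (hdet : ∀ x ∈ closure Ω,
      (Matrix.of fun (i k : Fin (d+1)) => gradient (a k) x i).det ≠ 0) :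
    ∃ ρ₁ ∈ Set.Ioo 0 ρ₀, ∃ ℓt : Esp d → ℝ,
      ContDiffOn ℝ 2 ℓt (closedBall 0 ρ₁) ∧
      (∀ x' : Esp d, ‖x'‖ < ρ₁ → 0 < ℓt x') ∧
      (∀ x' : Esp d, ‖x'‖ = ρ₁ → ℓt x' = 0 ∧ gradient ℓt x' = 0) ∧
      graphDomain d ρ₁ ℓ ℓt ⊆ Ω ∧
      (0 : Esp (d+1)) ∈ frontier (graphDomain d ρ₁ ℓ ℓt) ∩ frontier Ω ∧
      ∀ M₀ > (0:ℝ), ∃ C > (0:ℝ), ∃ θ ∈ Set.Ioo (0:ℝ) 1,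
        ∀ H₁ H₂ : Esp (d+1) → Esp (d+1),
          IsAdmissible M δ₀ (closure Ω) H₁ → δ₀ < ⟪H₁ 0, nuUp d ℓ 0⟫ →
          IsAdmissible M δ₀ (closure Ω) H₂ → δ₀ < ⟪H₂ 0, nuUp d ℓ 0⟫ →
          ∀ u₁ u₂ : Fin (d+1) → Esp (d+1) → ℝ → ℝ,
          (∀ k : Fin (d+1),
            (ContDiffOn ℝ 1 (fun q : Esp (d+1) × ℝ => u₁ k q.1 q.2) (closure Ω ×ˢ Icc 0 T) ∧
            ContDiffOn ℝ 1 (fun q : Esp (d+1) × ℝ => deriv (u₁ k q.1) q.2)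
              (closure Ω ×ˢ Icc 0 T) ∧
            (∀ x ∈ Ω, ∀ t ∈ Ioo 0 T,
              deriv (u₁ k x) t + ⟪H₁ x, gradient (fun z => u₁ k z t) x⟫
                + p x * u₁ k x t = 0) ∧
            (∀ x ∈ Ω, u₁ k x 0 = a k x)) ∧
            (∫ t in Ioo 0 T,
              (⨆ x : Ω, ‖gradient (fun z => deriv (u₁ k z) t) (x : Esp (d+1))‖) ^ 2)
              ≤ M₀ ^ 2) →
          (∀ k : Fin (d+1),
            (ContDiffOn ℝ 1 (fun q : Esp (d+1) × ℝ => u₂ k q.1 q.2) (closure Ω ×ˢ Icc 0 T) ∧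
            ContDiffOn ℝ 1 (fun q : Esp (d+1) × ℝ => deriv (u₂ k q.1) q.2)
              (closure Ω ×ˢ Icc 0 T) ∧
            (∀ x ∈ Ω, ∀ t ∈ Ioo 0 T,
              deriv (u₂ k x) t + ⟪H₂ x, gradient (fun z => u₂ k z t) x⟫
                + p x * u₂ k x t = 0) ∧
            (∀ x ∈ Ω, u₂ k x 0 = a k x)) ∧
            (∫ t in Ioo 0 T,
              (⨆ x : Ω, ‖gradient (fun z => deriv (u₂ k z) t) (x : Esp (d+1))‖) ^ 2)
              ≤ M₀ ^ 2) →
          Real.sqrt (∫ x in graphDomain d ρ₁ ℓ ℓt, ‖H₁ x - H₂ x‖ ^ 2) ≤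
            C * ((∑ k : Fin (d+1), (Real.sqrt (∫ t in Ioo 0 T, ∫ x' in ball (0 : Esp d) ρ₀,
                (deriv (u₁ k (graphMk d x' (ℓ x'))) t
                  - deriv (u₂ k (graphMk d x' (ℓ x'))) t) ^ 2
                  * omegaW d ℓ x')) ^ θ)
              + ∑ k : Fin (d+1), Real.sqrt (∫ t in Ioo 0 T, ∫ x' in ball (0 : Esp d) ρ₀,
                (deriv (u₁ k (graphMk d x' (ℓ x'))) t
                  - deriv (u₂ k (graphMk d x' (ℓ x'))) t) ^ 2
                  * omegaW d ℓ x')) := by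
  obtain ⟨Cp, hCp⟩ := hpb
  have hcollar : ContainsSubgraphCollar ρ₀ c ℓ Ω := hΩsub
  have h0 : (0 : Esp (d + 1)) ∉ Ω := by
    have hgraph := hΩdis 0 0 (by rwa [norm_zero]) hℓ0.le (by linarith)
    rwa [show graphMk d 0 0 = 0 from map_zero (graphEquiv d)] at hgraph
  obtain ⟨ρ₁, hρ₁, h, hh, hD, hfrontier, hstable⟩ := theorem1_local_stability_inverse_drift_general
    hT hρ₀ hM hδ₀ hc hℓ hℓ0 hΩo hΩb hcollar h0 (fun x hx => hCp x (subset_closure hx)) ha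
    (hdet 0 (hcollar.zero_mem_closure hρ₀ hc hℓ0))
  refine ⟨ρ₁, hρ₁, h, hh.contDiffOn, hh.pos, hh.eq_zero, hD, hfrontier, fun M₀ hM₀ => ?_⟩
  obtain ⟨C, hC, hstable⟩ := hstable M₀ hM₀
  refine ⟨C, hC, 1 / 2, by norm_num, fun H₁ H₂ hH₁ hH0 hH₂ _ u₁ u₂ hu₁ hu₂ => ?_⟩
  refine (hstable H₁ H₂ hH₁.isC1BoundedNear hH0 hH₂.isC1BoundedNear.contDiffOn.continuousOn u₁ u₂
    (fun j => let ⟨⟨hu, hut, heq, hinit⟩, _⟩ := hu₁ j; ⟨hu, hut, heq, hinit⟩)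
    (fun j => let ⟨⟨hu, hut, heq, hinit⟩, _⟩ := hu₂ j; ⟨hu, hut, heq, hinit⟩)
    fun j => (hu₂ j).2).trans ?_
  refine mul_le_mul_of_nonneg_left (le_add_of_nonneg_left ?_) hC.le
  exact Finset.sum_nonneg fun j _ => Real.rpow_nonneg (Real.sqrt_nonneg _) _
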